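/- arXiv:2010.07191 — 4 statements merged into one kernel-verified Lean document; each statement's English description precedes it below -/
import Mathlib

section
/- Let p, ε ∈ (0,1] and let k, n be positive integers. If G is a graph on n vertices, then all but at most (2k/(p²ε))·n edges of G are (p,ε,k)-admissible. -/
/-!
Fix a vertex set `U` and call an edge `xy` of `G[U]` bad if `G[U]` has no `k` internally disjoint
`x`-`y` paths besides the edge itself. The deterministic core is that `G[U]` has at most `2k|U|` bad
edges (`card_bad_pairs_le`). Averaging over the random set `U` gives the theorem: a non-admissible
edge is bad with probability at least `p²ε` (`le_bad_weight`), so there are at most `2kn / (p²ε)`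
such edges.

The deterministic bound is a variant of Mader's theorem on highly connected subgraphs. By Menger's
theorem (`menger`), the ends of a bad edge can be separated in `G[U]` by deleting that edge and
fewer than `k` vertices (`exists_cut`), and the same holds inside every `W ⊆ U` containing both
ends. Induction on `|W|` then shows that `W` spans at most `2k(|W| - k)` bad edges when
`|W| ≥ 2k` (`card_pairsIn_add_le`): either some vertex of `W` lies on at most `2k` bad edges and is
removed, or a cut at a bad edge splits `W` into two smaller sets, each with at least `2k` vertices,
overlapping in fewer than `k` vertices and together covering all bad edges but one.

Menger's theorem is proved for directed paths between two vertex sets, since for single arcs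
Göring's induction needs no choice of orientation.
-/

open Classical in
/-- The probability that a random subset `U` of the vertex set (each vertex chosen
independently with probability `p`) satisfies the predicate `E`. -/
noncomputable def vertexSubsetProb {V : Type*} [Fintype V] (p : ℝ) (E : Finset V → Prop) : ℝ :=
  ∑ U : Finset V, if E U then p ^ U.card * (1 - p) ^ (Fintype.card V - U.card) else 0

/-- There exist `k` internally vertex-disjoint paths from `x` to `y`, all of whose vertices
lie in `U`, each different from the single-edge path `xy` (i.e. of length at least 2). -/
def HasKDisjointPaths {V : Type*} (G : SimpleGraph V) (U : Set V) (x y : V) (k : ℕ) : Prop :=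
  ∃ P : Fin k → G.Walk x y,
    (∀ i, (P i).IsPath) ∧ (∀ i, 2 ≤ (P i).length) ∧
    (∀ i, ∀ v ∈ (P i).support, v ∈ U) ∧
    (∀ i j, i ≠ j → ∀ v, v ∈ (P i).support → v ∈ (P j).support → v = x ∨ v = y)

/-- The pair `(x, y)` is `(p, ε, k)`-admissible in `G`: conditioned on both `x` and `y`
belonging to the random vertex subset `U`, with probability at least `1 - ε` there are `k`
internally vertex-disjoint paths (other than the single-edge path) joining `x` and `y`
in the induced subgraph `G[U]`. -/
def EdgeAdmissible {V : Type*} [Fintype V] (G : SimpleGraph V) (p ε : ℝ) (k : ℕ)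
    (x y : V) : Prop :=
  (1 - ε) * vertexSubsetProb p (fun U => x ∈ U ∧ y ∈ U) ≤
    vertexSubsetProb p (fun U => x ∈ U ∧ y ∈ U ∧ HasKDisjointPaths G (↑U) x y k)

/-! ### Menger's theorem for directed paths -/

/-- `SimplePath r a b s`: there is a directed path from `a` to `b` along the relation `r`, without
repeated vertices, whose set of vertices is exactly `s`. -/
inductive SimplePath {V : Type*} (r : V → V → Prop) : V → V → Set V → Prop
  | nil (a : V) : SimplePath r a a {a}
  | cons {a b c : V} {s : Set V} : r a b → SimplePath r b c s → a ∉ s →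
      SimplePath r a c (insert a s)

namespace SimplePath

variable {V : Type*} {r : V → V → Prop} {a b c v : V} {s t : Set V}

lemma start_mem (h : SimplePath r a b s) : a ∈ s := by
  cases h <;> simp

lemma end_mem (h : SimplePath r a b s) : b ∈ s := by
  induction h with
  | nil a => simp
  | cons _ _ _ ih => exact Set.mem_insert_of_mem _ ih

lemma mono {r' : V → V → Prop} (hr : ∀ u v, r u v → r' u v) (h : SimplePath r a b s) :
    SimplePath r' a b s := by
  induction h with
  | nil a => exact nil a
  | cons h1 _ h3 ih => exact cons (hr _ _ h1) ih h3

lemma prefix_to (h : SimplePath r a b s) (hv : v ∈ s) :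
    ∃ s' ⊆ s, SimplePath r a v s' ∧ (v ≠ b → b ∉ s') := by
  induction h with
  | nil a =>
    obtain rfl : v = a := hv
    exact ⟨{v}, subset_rfl, nil v, fun h => absurd rfl h⟩
  | @cons a b c s h1 h2 h3 ih =>
    have hac : c ≠ a := fun h => h3 (h ▸ h2.end_mem)
    rcases hv with rfl | hv
    · exact ⟨{v}, by simp, nil v, fun _ => by simpa using hac⟩
    · obtain ⟨s', hs, hp, hb⟩ := ih hv
      refine ⟨insert a s', Set.insert_subset_insert hs, cons h1 hp fun h => h3 (hs h), ?_⟩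
      intro hvc h
      rcases h with h | h
      · exact hac h
      · exact hb hvc h

lemma suffix_from (h : SimplePath r a b s) (hv : v ∈ s) :
    ∃ s' ⊆ s, SimplePath r v b s' ∧ (v ≠ a → a ∉ s') := by
  induction h with
  | nil a =>
    obtain rfl : v = a := hv
    exact ⟨{v}, subset_rfl, nil v, fun h => absurd rfl h⟩
  | @cons a b c s h1 h2 h3 ih =>
    rcases hv with rfl | hv
    · exact ⟨_, subset_rfl, cons h1 h2 h3, fun h => absurd rfl h⟩
    · obtain ⟨s', hs, hp, -⟩ := ih hv
      exact ⟨s', hs.trans (Set.subset_insert _ _), hp, fun _ h => h3 (hs h)⟩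

/-- Concatenating two paths gives a walk, which contains a path. -/
lemma append (h : SimplePath r a b s) (h' : SimplePath r b c t) :
    ∃ u ⊆ s ∪ t, SimplePath r a c u := by
  induction h with
  | nil a => exact ⟨t, Set.subset_union_right, h'⟩
  | @cons a b d s h1 h2 h3 ih =>
    obtain ⟨u, hu, hp⟩ := ih h'
    by_cases ha : a ∈ u
    · obtain ⟨u', hu', hp', -⟩ := hp.suffix_from ha
      refine ⟨u', (hu'.trans hu).trans ?_, hp'⟩
      exact Set.union_subset_union_left _ (Set.subset_insert _ _)
    · refine ⟨insert a u, ?_, cons h1 hp ha⟩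
      rw [Set.insert_union]
      exact Set.insert_subset_insert hu

lemma first_hit {T : Set V} (h : SimplePath r a b s) (hT : ∃ v ∈ s, v ∈ T) :
    ∃ w ∈ T, ∃ s' ⊆ s, SimplePath r a w s' ∧ ∀ v ∈ s', v ∈ T → v = w := by
  induction h with
  | nil a =>
    obtain ⟨v, rfl, hv⟩ := hT
    exact ⟨v, hv, {v}, subset_rfl, nil v, fun u hu _ => hu⟩
  | @cons a b c s h1 h2 h3 ih =>
    by_cases ha : a ∈ T
    · exact ⟨a, ha, {a}, by simp, nil a, fun u hu _ => hu⟩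
    · obtain ⟨v, hv, hvT⟩ := hT
      have hvs : v ∈ s := hv.resolve_left fun h => ha (h ▸ hvT)
      obtain ⟨w, hw, s', hs, hp, hq⟩ := ih ⟨v, hvs, hvT⟩
      refine ⟨w, hw, insert a s', Set.insert_subset_insert hs, cons h1 hp fun h => h3 (hs h), ?_⟩
      rintro u (rfl | hu) huT
      · exact absurd huT ha
      · exact hq u hu huT

lemma last_hit {T : Set V} (h : SimplePath r a b s) (hT : ∃ v ∈ s, v ∈ T) :
    ∃ w ∈ T, ∃ s' ⊆ s, SimplePath r w b s' ∧ ∀ v ∈ s', v ∈ T → v = w := by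
  induction h with
  | nil a =>
    obtain ⟨v, rfl, hv⟩ := hT
    exact ⟨v, hv, {v}, subset_rfl, nil v, fun u hu _ => hu⟩
  | @cons a b c s h1 h2 h3 ih =>
    by_cases hs : ∃ v ∈ s, v ∈ T
    · obtain ⟨w, hw, s', hs, hp, hq⟩ := ih hs
      exact ⟨w, hw, s', hs.trans (Set.subset_insert _ _), hp, hq⟩
    · obtain ⟨v, hv, hvT⟩ := hT
      obtain rfl : v = a := hv.resolve_right fun h => hs ⟨v, h, hvT⟩
      refine ⟨v, hvT, _, subset_rfl, cons h1 h2 h3, ?_⟩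
      rintro u (rfl | hu) huT
      · rfl
      · exact absurd ⟨u, hu, huT⟩ hs

/-- A path that visits `x` at most as its last vertex never uses an arc leaving `x`. -/
lemma avoid_tail {x y : V} {r' : V → V → Prop}
    (hr : ∀ u v, r u v → r' u v ∨ (u = x ∧ v = y))
    (h : SimplePath r a b s) (hx : x ∈ s → x = b) : SimplePath r' a b s := by
  induction h with
  | nil a => exact nil a
  | @cons a b c s h1 h2 h3 ih =>
    refine cons ((hr _ _ h1).resolve_right ?_) (ih fun h => hx (Set.mem_insert_of_mem _ h)) h3
    rintro ⟨rfl, -⟩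
    exact h3 (hx (Set.mem_insert _ _) ▸ h2.end_mem)

/-- A path that visits `y` at most as its first vertex never uses an arc entering `y`. -/
lemma avoid_head {x y : V} {r' : V → V → Prop}
    (hr : ∀ u v, r u v → r' u v ∨ (u = x ∧ v = y))
    (h : SimplePath r a b s) (hy : y ∈ s → y = a) : SimplePath r' a b s := by
  induction h with
  | nil a => exact nil a
  | @cons a b c s h1 h2 h3 ih =>
    have hys : y ∉ s := fun h => h3 (hy (Set.mem_insert_of_mem _ h) ▸ h)
    refine cons ((hr _ _ h1).resolve_right ?_) (ih fun h => absurd h hys) h3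
    rintro ⟨-, rfl⟩
    exact hys h2.start_mem

end SimplePath

/-- `T` meets every directed path from `A` to `B` along the arcs in `E`. -/
def Separates {V : Type*} (E : Finset (V × V)) (A B : Set V) (T : Finset V) : Prop :=
  ∀ a ∈ A, ∀ b ∈ B, ∀ s, SimplePath (fun u v => (u, v) ∈ E) a b s → ∃ v ∈ s, v ∈ T

/-- There are `k` pairwise vertex-disjoint directed paths from `A` to `B` along the arcs in `E`. -/
def HasLinkage {V : Type*} (E : Finset (V × V)) (A B : Set V) (k : ℕ) : Prop :=
  ∃ (a b : Fin k → V) (s : Fin k → Set V), (∀ i, a i ∈ A) ∧ (∀ i, b i ∈ B) ∧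
    (∀ i, SimplePath (fun u v => (u, v) ∈ E) (a i) (b i) (s i)) ∧
    ∀ i j, ∀ v, v ∈ s i → v ∈ s j → i = j

/-- Gluing step of Menger's theorem: with `S` separating `A` from `B` and `|S| + 1 = k`, full
linkages from `A` to `S ∪ {x}` and from `S ∪ {y}` to `B` can only meet in `S`, so they combine,
together with the arc `(x, y)`, to a linkage from `A` to `B`. -/
lemma HasLinkage.glue {V : Type*} [DecidableEq V] {E : Finset (V × V)} {x y : V} {A B : Set V}
    {S : Finset V} (k : ℕ) (hS : Separates E A B S) (hx : x ∉ S) (hy : y ∉ S)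
    (hk : S.card + 1 = k)
    (hP : HasLinkage E A (insert x S : Finset V) k)
    (hQ : HasLinkage E (insert y S : Finset V) B k) :
    HasLinkage (insert (x, y) E) A B k := by
  obtain ⟨a, e, s, ha, he, hs, hsd⟩ := hP
  obtain ⟨e', b, s', he', hb, hs', hsd'⟩ := hQ
  have einj : Function.Injective e := fun i j h => hsd i j (e i) (hs i).end_mem (h ▸ (hs j).end_mem)
  have einj' : Function.Injective e' := fun i j h =>
    hsd' i j (e' i) (hs' i).start_mem (h ▸ (hs' j).start_mem)
  -- Both linkages have as many paths as their middle set has vertices, so they cover it.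
  have img : ∀ (z : V) (g : Fin k → V), z ∉ S → Function.Injective g →
      (∀ i, g i ∈ ((insert z S : Finset V) : Set V)) → ∀ w ∈ insert z S, ∃ i, g i = w := by
    intro z g hz hg hgm w hw
    have : Finset.univ.image g = insert z S := by
      apply Finset.eq_of_subset_of_card_le
      · intro u hu
        obtain ⟨i, -, rfl⟩ := Finset.mem_image.1 hu
        exact hgm i
      · rw [Finset.card_image_of_injective _ hg, Finset.card_insert_of_notMem hz]
        simp [hk]
    rw [← this] at hw
    obtain ⟨i, -, hi⟩ := Finset.mem_image.1 hw
    exact ⟨i, hi⟩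
  have esurj := img x e hx einj he
  have esurj' := img y e' hy einj' he'
  have onP : ∀ i, ∀ v ∈ s i, v ∈ S → v = e i := by
    intro i v hv hvS
    obtain ⟨j, rfl⟩ := esurj v (Finset.mem_insert_of_mem hvS)
    rw [hsd i j _ hv (hs j).end_mem]
  have onQ : ∀ i, ∀ v ∈ s' i, v ∈ S → v = e' i := by
    intro i v hv hvS
    obtain ⟨j, rfl⟩ := esurj' v (Finset.mem_insert_of_mem hvS)
    rw [hsd' i j _ hv (hs' j).start_mem]
  have cross : ∀ i j v, v ∈ s i → v ∈ s' j → v ∈ S := by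
    intro i j v hi hj
    by_contra hvS
    obtain ⟨t, ht, hpt, ht'⟩ := (hs i).prefix_to hi
    obtain ⟨t₂, ht₂, hpt₂, ht₂'⟩ := (hs' j).suffix_from hj
    obtain ⟨u, hu, hpu⟩ := hpt.append hpt₂
    obtain ⟨w, hw, hwS⟩ := hS _ (ha i) _ (hb j) u hpu
    rcases hu hw with h | h
    · have hwe := onP i w (ht h) hwS
      subst hwe
      exact ht' (fun h' => hvS (h' ▸ hwS)) h
    · have hwe := onQ j w (ht₂ h) hwS
      subst hwe
      exact ht₂' (fun h' => hvS (h' ▸ hwS)) h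
  set f : V → V := fun v => if v = x then y else v with hf
  have hfm : ∀ i, f (e i) ∈ insert y S := by
    intro i
    have := he i
    simp only [hf]
    split_ifs with h
    · simp
    · simp only [Finset.coe_insert, Set.mem_insert_iff, h, Finset.mem_coe, false_or] at this
      simp [this]
  choose j hj using fun i => esurj' _ (hfm i)
  have jinj : ∀ i i', j i = j i' → i = i' := by
    intro i i' h
    have h1 : f (e i) = f (e i') := by rw [← hj, ← hj, h]
    apply einj
    have h2 := he i
    have h3 := he i'
    simp only [Finset.coe_insert, Set.mem_insert_iff, Finset.mem_coe] at h2 h3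
    simp only [hf] at h1
    grind
  have main : ∀ i, ∃ u ⊆ s i ∪ s' (j i),
      SimplePath (fun u v => (u, v) ∈ insert (x, y) E) (a i) (b (j i)) u := by
    intro i
    have h1 := (hs i).mono (r' := fun u v => (u, v) ∈ insert (x, y) E)
      fun u v h => Finset.mem_insert_of_mem h
    have h2 := (hs' (j i)).mono (r' := fun u v => (u, v) ∈ insert (x, y) E)
      fun u v h => Finset.mem_insert_of_mem h
    rw [hj] at h2
    by_cases hef : f (e i) = e i
    · rw [hef] at h2
      exact h1.append h2
    · have hex : e i = x := by
        by_contra h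
        exact hef (by simp [hf, h])
      have hfy : f (e i) = y := by simp [hf, hex]
      have h3 : SimplePath (fun u v => (u, v) ∈ insert (x, y) E) (e i) (f (e i))
          (insert (e i) {f (e i)}) := by
        refine .cons ?_ (.nil _) (fun h => hef h.symm)
        rw [hfy, hex]
        exact Finset.mem_insert_self _ _
      obtain ⟨u, hu, hpu⟩ := h1.append h3
      obtain ⟨u', hu', hpu'⟩ := hpu.append h2
      refine ⟨u', fun v hv => ?_, hpu'⟩
      rcases hu' hv with h | h
      · rcases hu h with h | h | h
        · exact Or.inl h
        · exact Or.inl (h ▸ (hs i).end_mem)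
        · refine Or.inr ?_
          rw [show v = f (e i) from h, ← hj]
          exact (hs' (j i)).start_mem
      · exact Or.inr h
  choose u hu hpu using main
  have mix : ∀ i i' v, v ∈ s i → v ∈ s' (j i') → i = i' := by
    intro i i' v h h'
    have hvS := cross i (j i') v h h'
    have h1 := onP i v h hvS
    have h2 := onQ (j i') v h' hvS
    rw [hj] at h2
    apply einj
    simp only [hf] at h2
    split_ifs at h2 with h3
    · exact absurd (h2 ▸ hvS) hy
    · rw [← h1, ← h2]
  refine ⟨a, fun i => b (j i), u, ha, fun i => hb _, hpu, fun i i' v hv hv' => ?_⟩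
  rcases hu i hv with h | h <;> rcases hu i' hv' with h' | h'
  · exact hsd i i' v h h'
  · exact mix i i' v h h'
  · exact (mix i' i v h' h).symm
  · exact jinj _ _ (hsd' _ _ v h h')

/-- Menger's theorem for directed paths between two vertex sets, by induction on the arc set
(Göring's argument). -/
theorem menger {V : Type*} [Fintype V] (k : ℕ) (E : Finset (V × V)) (A B : Set V)
    (h : ∀ T, Separates E A B T → k ≤ T.card) : HasLinkage E A B k := by
  classical
  induction E using Finset.induction_on generalizing A B with
  | empty =>
    have hsep : Separates ∅ A B (A ∩ B).toFinset := by
      intro a ha b hb s hs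
      cases hs with
      | nil => exact ⟨a, rfl, by simp [ha, hb]⟩
      | cons h _ _ => simp at h
    have hc := h _ hsep
    obtain ⟨T, hT, hTk⟩ := Finset.exists_subset_card_eq hc
    let g := T.equivFinOfCardEq hTk
    refine ⟨fun i => g.symm i, fun i => g.symm i, fun i => {(g.symm i : V)}, ?_, ?_, ?_, ?_⟩
    · intro i
      have := hT (g.symm i).2
      simp only [Set.mem_toFinset] at this
      exact this.1
    · intro i
      have := hT (g.symm i).2
      simp only [Set.mem_toFinset] at this
      exact this.2
    · exact fun i => .nil _
    · intro i j v hi hj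
      exact g.symm.injective (Subtype.ext ((show v = _ from hi).symm.trans hj))
  | insert p E hp ih =>
    obtain ⟨x, y⟩ := p
    have hr : ∀ u v, (u, v) ∈ insert (x, y) E → (u, v) ∈ E ∨ (u = x ∧ v = y) := by
      intro u v h
      rcases Finset.mem_insert.1 h with h | h
      · exact Or.inr (by simpa using h)
      · exact Or.inl h
    by_cases hE : ∀ T, Separates E A B T → k ≤ T.card
    · obtain ⟨a, b, s, ha, hb, hs, hd⟩ := ih A B hE
      exact ⟨a, b, s, ha, hb,
        fun i => (hs i).mono fun u v h => Finset.mem_insert_of_mem h, hd⟩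
    push Not at hE
    obtain ⟨S, hS, hSk⟩ := hE
    have sepx : Separates (insert (x, y) E) A B (insert x S) := by
      intro a ha b hb s hs
      by_cases hx : x ∈ s
      · exact ⟨x, hx, by simp⟩
      · obtain ⟨v, hv, hvS⟩ := hS a ha b hb s (hs.avoid_tail hr fun h => absurd h hx)
        exact ⟨v, hv, by simp [hvS]⟩
    have sepy : Separates (insert (x, y) E) A B (insert y S) := by
      intro a ha b hb s hs
      by_cases hy : y ∈ s
      · exact ⟨y, hy, by simp⟩
      · obtain ⟨v, hv, hvS⟩ := hS a ha b hb s (hs.avoid_head hr fun h => absurd h hy)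
        exact ⟨v, hv, by simp [hvS]⟩
    have hx : x ∉ S := by
      intro hx
      have := h _ sepx
      rw [Finset.insert_eq_of_mem hx] at this
      omega
    have hy : y ∉ S := by
      intro hy
      have := h _ sepy
      rw [Finset.insert_eq_of_mem hy] at this
      omega
    have hk : S.card + 1 = k := by
      have := h _ sepx
      rw [Finset.card_insert_of_notMem hx] at this
      omega
    refine HasLinkage.glue k hS hx hy hk (ih _ _ ?_) (ih _ _ ?_)
    · intro T hT
      apply h
      intro a ha b hb s hs
      -- Up to its first vertex in `S ∪ {x}`, the path does not use the arc `(x, y)`.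
      obtain ⟨w, hw, s', hss, hp', hu⟩ :=
        hs.first_hit (T := (insert x S : Finset V)) (sepx a ha b hb s hs)
      obtain ⟨v, hv, hvT⟩ := hT a ha w hw s'
        (hp'.avoid_tail hr fun h => hu x h (by simp))
      exact ⟨v, hss hv, hvT⟩
    · intro T hT
      apply h
      intro a ha b hb s hs
      obtain ⟨w, hw, s', hss, hp', hu⟩ :=
        hs.last_hit (T := (insert y S : Finset V)) (sepy a ha b hb s hs)
      obtain ⟨v, hv, hvT⟩ := hT w hw b hb s'
        (hp'.avoid_head hr fun h => hu y h (by simp))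
      exact ⟨v, hss hv, hvT⟩

/-! ### Cutting at a bad edge -/

lemma SimplePath.exists_walk {V : Type*} {r : V → V → Prop} {G : SimpleGraph V}
    (hr : ∀ u v, r u v → G.Adj u v) {a b : V} {s : Set V} (h : SimplePath r a b s) :
    ∃ p : G.Walk a b, p.IsPath ∧ ∀ v, v ∈ p.support ↔ v ∈ s := by
  induction h with
  | nil a => exact ⟨.nil, .nil, by simp⟩
  | cons h1 _ h3 ih =>
    obtain ⟨p, hp, hs⟩ := ih
    refine ⟨.cons (hr _ _ h1) p, ?_, by simp [hs]⟩
    rw [SimpleGraph.Walk.cons_isPath_iff]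
    exact ⟨hp, by rwa [hs]⟩

lemma SimplePath.subset {V : Type*} {r : V → V → Prop} {R : Set V}
    (hr : ∀ u v, r u v → v ∈ R) {a b : V} {s : Set V} (h : SimplePath r a b s) (ha : a ∈ R) :
    s ⊆ R := by
  induction h with
  | nil a => simpa using ha
  | cons h1 _ _ ih => exact Set.insert_subset ha (ih (hr _ _ h1))

lemma HasKDisjointPaths.symm {V : Type*} {G : SimpleGraph V} {U : Set V} {x y : V} {k : ℕ}
    (h : HasKDisjointPaths G U x y k) : HasKDisjointPaths G U y x k := by
  obtain ⟨P, h1, h2, h3, h4⟩ := h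
  refine ⟨fun i => (P i).reverse, fun i => (h1 i).reverse, fun i => by simpa using h2 i,
    fun i v hv => h3 i v (by simpa using hv), fun i j hij v hi hj => ?_⟩
  exact (h4 i j hij v (by simpa using hi) (by simpa using hj)).symm

lemma HasKDisjointPaths.mono {V : Type*} {G : SimpleGraph V} {U U' : Set V} {x y : V} {k : ℕ}
    (hU : U ⊆ U') (h : HasKDisjointPaths G U x y k) : HasKDisjointPaths G U' x y k := by
  obtain ⟨P, h1, h2, h3, h4⟩ := h
  exact ⟨P, h1, h2, fun i v hv => hU (h3 i v hv), h4⟩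

/-- If there are fewer than `k` disjoint nontrivial paths from `x` to `y` inside `W`, then deleting
fewer than `k` vertices `S` and the edge `xy` from `G[W]` separates `x` from `y`; `C` is the set of
vertices still reachable from `x`. -/
lemma exists_cut {V : Type*} [Fintype V] [DecidableEq V] (G : SimpleGraph V) (W : Finset V)
    {x y : V} {k : ℕ} (hx : x ∈ W) (hy : y ∈ W) (hxy : x ≠ y)
    (h : ¬ HasKDisjointPaths G W x y k) :
    ∃ S ⊆ W, ∃ C ⊆ W, S.card < k ∧ Disjoint C S ∧ x ∈ C ∧ y ∉ C ∧ y ∉ S ∧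
      ∀ u ∈ C, ∀ v ∈ W, v ∉ S → v ∉ C → G.Adj u v → u = x ∧ v = y := by
  classical
  -- Menger is applied inside `W \ {x, y}`, between the neighbours of `x` and those of `y`.
  set R : Finset V := (W.erase x).erase y with hR
  set E : Finset (V × V) := (R ×ˢ R).filter fun p => G.Adj p.1 p.2 with hE
  set A : Set V := {v | v ∈ R ∧ G.Adj x v} with hA
  set B : Set V := {v | v ∈ R ∧ G.Adj v y} with hB
  have hEm : ∀ u v, (u, v) ∈ E ↔ u ∈ R ∧ v ∈ R ∧ G.Adj u v := by
    intro u v; simp [hE, and_assoc]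
  have hRm : ∀ v, v ∈ R ↔ v ≠ y ∧ v ≠ x ∧ v ∈ W := by
    intro v; simp [hR]
  have hsep : ∃ T, Separates E A B T ∧ T.card < k := by
    by_contra hcon
    push Not at hcon
    obtain ⟨a, b, s, ha, hb, hs, hd⟩ := menger k E A B hcon
    apply h
    have hsR : ∀ i, s i ⊆ (R : Set V) := fun i =>
      (hs i).subset (fun u v huv => ((hEm u v).1 huv).2.1) (ha i).1
    choose p hp hps using fun i =>
      (hs i).exists_walk (G := G) fun u v huv => ((hEm u v).1 huv).2.2
    have hsupp : ∀ i v, v ∈ ((SimpleGraph.Walk.cons (ha i).2 (p i)).concat (hb i).2).support →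
        v = x ∨ v ∈ s i ∨ v = y := by
      intro i v hv
      simpa [SimpleGraph.Walk.support_concat, hps, or_assoc] using hv
    refine ⟨fun i => (SimpleGraph.Walk.cons (ha i).2 (p i)).concat (hb i).2, ?_, ?_, ?_, ?_⟩
    · intro i
      refine SimpleGraph.Walk.IsPath.concat ?_ ?_ _
      · rw [SimpleGraph.Walk.cons_isPath_iff]
        refine ⟨hp i, fun hx' => ?_⟩
        exact ((hRm x).1 (hsR i ((hps i x).1 hx'))).2.1 rfl
      · intro hy'
        rw [SimpleGraph.Walk.support_cons, List.mem_cons] at hy'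
        rcases hy' with hy' | hy'
        · exact hxy hy'.symm
        · exact ((hRm y).1 (hsR i ((hps i y).1 hy'))).1 rfl
    · intro i
      simp
    · intro i v hv
      rcases hsupp i v hv with rfl | hv | rfl
      · exact hx
      · exact ((hRm v).1 (hsR i hv)).2.2
      · exact hy
    · intro i j hij v hi hj
      rcases hsupp i v hi with h1 | h1 | h1
      · exact Or.inl h1
      · rcases hsupp j v hj with h2 | h2 | h2
        · exact Or.inl h2
        · exact absurd (hd i j v h1 h2) hij
        · exact Or.inr h2
      · exact Or.inr h1
  obtain ⟨T, hT, hTk⟩ := hsep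
  set C : Finset V := insert x (R.filter fun v => v ∉ T ∧
    ∃ a ∈ A, ∃ s, SimplePath (fun u v => (u, v) ∈ E) a v s ∧ ∀ w ∈ s, w ∉ T) with hC
  have hRW : ∀ v ∈ R, v ∈ W := fun v hv => ((hRm v).1 hv).2.2
  refine ⟨T ∩ R, fun v hv => hRW v (Finset.mem_inter.1 hv).2, C, ?_, ?_, ?_, ?_, ?_, ?_, ?_⟩
  · intro v hv
    rcases Finset.mem_insert.1 hv with rfl | hv
    · exact hx
    · exact hRW v (Finset.mem_filter.1 hv).1
  · exact (Finset.card_le_card Finset.inter_subset_left).trans_lt hTk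
  · rw [Finset.disjoint_left]
    intro v hv hv'
    rcases Finset.mem_insert.1 hv with rfl | hv
    · simp [hRm] at hv'
    · exact (Finset.mem_filter.1 hv).2.1 (Finset.mem_inter.1 hv').1
  · simp [hC]
  · simp [hC, hRm, hxy.symm]
  · simp [hRm]
  · intro u hu v hv hvS hvC huv
    have hvx : v ≠ x := fun h => hvC (by simp [hC, h])
    rcases Finset.mem_insert.1 hu with rfl | hu
    · refine ⟨rfl, ?_⟩
      by_contra hvy
      have hvR : v ∈ R := (hRm v).2 ⟨hvy, hvx, hv⟩
      have hvT : v ∉ T := fun h => hvS (Finset.mem_inter.2 ⟨h, hvR⟩)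
      refine hvC (Finset.mem_insert_of_mem (Finset.mem_filter.2 ⟨hvR, hvT, v, ⟨hvR, huv⟩, {v},
        .nil v, ?_⟩))
      rintro w rfl
      exact hvT
    · exfalso
      obtain ⟨huR, huT, a, ha, s, hs, hsT⟩ := Finset.mem_filter.1 hu
      by_cases hvy : v = y
      · subst hvy
        obtain ⟨w, hw, hwT⟩ := hT a ha u ⟨huR, huv⟩ s hs
        exact hsT w hw hwT
      · have hvR : v ∈ R := (hRm v).2 ⟨hvy, hvx, hv⟩
        have hvT : v ∉ T := fun h => hvS (Finset.mem_inter.2 ⟨h, hvR⟩)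
        have hstep : SimplePath (fun u v => (u, v) ∈ E) u v (insert u {v}) :=
          .cons ((hEm u v).2 ⟨huR, hvR, huv⟩) (.nil v) huv.ne
        obtain ⟨s', hs', hp'⟩ := hs.append hstep
        refine hvC (Finset.mem_insert_of_mem (Finset.mem_filter.2 ⟨hvR, hvT, a, ha, s', hp', ?_⟩))
        intro w hw
        rcases hs' hw with h | rfl | rfl
        · exact hsT w h
        · exact huT
        · exact hvT

/-! ### Counting bad edges -/

open Classical in
/-- The ordered pairs of vertices of `W` related by `D`. -/
noncomputable def pairsIn {V : Type*} (D : V → V → Prop) (W : Finset V) : Finset (V × V) :=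
  (W ×ˢ W).filter fun q => D q.1 q.2

lemma mem_pairsIn {V : Type*} {D : V → V → Prop} {W : Finset V} {q : V × V} :
    q ∈ pairsIn D W ↔ q.1 ∈ W ∧ q.2 ∈ W ∧ D q.1 q.2 := by
  simp [pairsIn, and_assoc]

lemma card_pairsIn_le_sq {V : Type*} (D : V → V → Prop) (W : Finset V) :
    (pairsIn D W).card ≤ W.card * W.card := by
  classical
  rw [← Finset.card_product]
  exact Finset.card_le_card (Finset.filter_subset _ _)

/-- Mader-type count: if the ends of every edge of `D[W]` can be separated by deleting that edge and
fewer than `k` vertices, for each `W ⊆ U`, then `D[W]` has at most `2k(|W| - k)` edges as soon as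
`|W| ≥ 2k`. Edges are counted as ordered pairs, and the bound is written without subtraction. -/
lemma card_pairsIn_add_le {V : Type*} [DecidableEq V] (D : V → V → Prop)
    (hsymm : ∀ u v, D u v → D v u) (hirr : ∀ u, ¬ D u u) (k : ℕ) (U : Finset V)
    (hcut : ∀ W ⊆ U, ∀ x ∈ W, ∀ y ∈ W, D x y → ∃ S ⊆ W, ∃ C ⊆ W, S.card < k ∧ Disjoint C S ∧
      x ∈ C ∧ y ∉ C ∧ y ∉ S ∧ ∀ u ∈ C, ∀ v ∈ W, v ∉ S → v ∉ C → D u v → u = x ∧ v = y)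
    (W : Finset V) (hW : W ⊆ U) (hc : 2 * k ≤ W.card) :
    (pairsIn D W).card + 4 * k * k ≤ 4 * k * W.card := by
  classical
  induction W using Finset.strongInduction with
  | H W ih =>
    rcases hc.eq_or_lt with hc | hc
    · have := card_pairsIn_le_sq D W
      rw [← hc] at this ⊢
      nlinarith
    by_cases hdeg : ∃ v ∈ W, (W.filter (D v)).card ≤ 2 * k
    · obtain ⟨v, hv, hvd⟩ := hdeg
      have hcard := Finset.card_erase_add_one hv
      have h1 := ih (W.erase v) (Finset.erase_ssubset hv) ((Finset.erase_subset _ _).trans hW)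
        (by omega)
      have hsub : pairsIn D W ⊆ pairsIn D (W.erase v) ∪
          ((W.filter (D v)).image (fun u => (v, u)) ∪ (W.filter (D v)).image fun u => (u, v)) := by
        rintro ⟨a, b⟩ hab
        obtain ⟨ha, hb, hD⟩ := mem_pairsIn.1 hab
        simp only at ha hb hD
        by_cases hav : a = v
        · subst hav; simp [hb, hD]
        · by_cases hbv : b = v
          · subst hbv; simp [ha, hsymm _ _ hD]
          · simp [mem_pairsIn, ha, hb, hD, hav, hbv]
      have h2 := Finset.card_le_card hsub
      have h3 := Finset.card_union_le (pairsIn D (W.erase v))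
        ((W.filter (D v)).image (fun u => (v, u)) ∪ (W.filter (D v)).image fun u => (u, v))
      have h4 := Finset.card_union_le ((W.filter (D v)).image (fun u => (v, u)))
        ((W.filter (D v)).image fun u => (u, v))
      have h5 : ((W.filter (D v)).image (fun u => (v, u))).card ≤ _ := Finset.card_image_le
      have h6 : ((W.filter (D v)).image (fun u => (u, v))).card ≤ _ := Finset.card_image_le
      rw [← hcard, mul_add]
      omega
    · push Not at hdeg
      obtain ⟨x, hx⟩ : W.Nonempty := Finset.card_pos.1 (by omega)
      obtain ⟨y, hy⟩ : (W.filter (D x)).Nonempty := Finset.card_pos.1 (by have := hdeg x hx; omega)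
      obtain ⟨hy, hxy⟩ := Finset.mem_filter.1 hy
      obtain ⟨S, hSW, C, hCW, hSk, hCS, hxC, hyC, hyS, hsep⟩ := hcut W hW x hx y hy hxy
      have hW1 : C ∪ S ⊆ W := Finset.union_subset hCW hSW
      have hyU : y ∉ C ∪ S := by simp [hyC, hyS]
      have hs1 : C ∪ S ⊂ W := (Finset.ssubset_iff_of_subset hW1).2 ⟨y, hy, hyU⟩
      have hs2 : W \ C ⊂ W :=
        (Finset.ssubset_iff_of_subset Finset.sdiff_subset).2 ⟨x, hx, by simp [hxC]⟩
      -- The neighbours of `x`, other than `y`, lie in `C ∪ S`; those of `y`, other than `x`,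
      -- in `W \ C`. Hence both sides are large enough for induction.
      have hc1 : 2 * k ≤ (C ∪ S).card := by
        have hsub : W.filter (D x) ⊆ insert y ((C ∪ S).erase x) := by
          intro v hv
          obtain ⟨hv, hxv⟩ := Finset.mem_filter.1 hv
          have hvx : v ≠ x := fun h => hirr x (h ▸ hxv)
          have := hsep x hxC v hv
          simp only [Finset.mem_insert, Finset.mem_erase, Finset.mem_union]
          tauto
        have h1 := Finset.card_le_card hsub
        have h2 := Finset.card_insert_le y ((C ∪ S).erase x)
        have h3 := Finset.card_erase_add_one (Finset.mem_union_left S hxC)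
        have := hdeg x hx
        omega
      have hc2 : 2 * k ≤ (W \ C).card := by
        have hsub : W.filter (D y) ⊆ insert x ((W \ C).erase y) := by
          intro v hv
          obtain ⟨hv, hyv⟩ := Finset.mem_filter.1 hv
          have hvy : v ≠ y := fun h => hirr y (h ▸ hyv)
          have := fun h => hsep v h y hy hyS hyC (hsymm _ _ hyv)
          simp only [Finset.mem_insert, Finset.mem_erase, Finset.mem_sdiff]
          tauto
        have h1 := Finset.card_le_card hsub
        have h2 := Finset.card_insert_le x ((W \ C).erase y)
        have h3 := Finset.card_erase_add_one (Finset.mem_sdiff.2 ⟨hy, hyC⟩)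
        have := hdeg y hy
        omega
      have h1 := ih _ hs1 (hW1.trans hW) hc1
      have h2 := ih _ hs2 (Finset.sdiff_subset.trans hW) hc2
      have hsub : pairsIn D W ⊆ (pairsIn D (C ∪ S) ∪ pairsIn D (W \ C)) ∪ {(x, y), (y, x)} := by
        rintro ⟨a, b⟩ hab
        obtain ⟨ha, hb, hD⟩ := mem_pairsIn.1 hab
        simp only at ha hb hD
        have h1 := fun h => hsep a h b hb
        have h2 := fun h => hsep b h a ha
        have h3 := hsymm _ _ hD
        simp only [Finset.mem_union, mem_pairsIn, Finset.mem_sdiff, Finset.mem_insert,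
          Finset.mem_singleton, Prod.mk.injEq]
        clear * - h1 h2 h3 hD ha hb
        grind
      have h3 := Finset.card_le_card hsub
      have h4 := Finset.card_union_le (pairsIn D (C ∪ S) ∪ pairsIn D (W \ C)) {(x, y), (y, x)}
      have h5 := Finset.card_union_le (pairsIn D (C ∪ S)) (pairsIn D (W \ C))
      have h6 : ({(x, y), (y, x)} : Finset (V × V)).card ≤ 2 := Finset.card_le_two
      have h7 := Finset.card_union_of_disjoint hCS
      have h8 := Finset.card_sdiff_add_card_eq_card hCW
      have h9 : (C ∪ S).card + (W \ C).card + 1 ≤ W.card + k := by omega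
      have h10 := Nat.mul_le_mul_left (4 * k) h9
      have hk : 0 < k := by omega
      clear * - h1 h2 h3 h4 h5 h6 h10 hk
      have h11 : (pairsIn D W).card ≤
          (pairsIn D (C ∪ S)).card + (pairsIn D (W \ C)).card + 2 := by omega
      nlinarith

/-- For every vertex set `U`, the graph `G[U]` has at most `2k|U|` edges whose ends are not joined
by `k` internally disjoint further paths inside `U`. Edges are counted as ordered pairs. -/
lemma card_bad_pairs_le {V : Type*} [Fintype V] (G : SimpleGraph V) (k : ℕ) (U : Finset V) :
    (pairsIn (fun x y => G.Adj x y ∧ ¬ HasKDisjointPaths G U x y k) U).card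
      ≤ 4 * k * U.card := by
  classical
  set D : V → V → Prop := fun x y => G.Adj x y ∧ ¬ HasKDisjointPaths G U x y k with hD
  rcases le_or_gt (2 * k) U.card with h | h
  · refine (Nat.le_add_right _ _).trans (card_pairsIn_add_le D (fun u v h => ⟨h.1.symm,
      fun h' => h.2 h'.symm⟩) (fun u h => G.irrefl h.1) k U ?_ U subset_rfl h)
    intro W hW x hx y hy hxy
    obtain ⟨S, hS, C, hC, h1, h2, h3, h4, h5, h6⟩ := exists_cut G W hx hy hxy.1.ne
      fun h => hxy.2 (h.mono (by exact_mod_cast hW))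
    exact ⟨S, hS, C, hC, h1, h2, h3, h4, h5, fun u hu v hv hvS hvC huv =>
      h6 u hu v hv hvS hvC huv.1⟩
  · refine (card_pairsIn_le_sq D U).trans (Nat.mul_le_mul_right _ ?_)
    omega

/-! ### Averaging over the random vertex set -/

/-- The weight of the vertex set `U` in the random selection with probability `p`. -/
noncomputable def subsetWeight {V : Type*} [Fintype V] (p : ℝ) (U : Finset V) : ℝ :=
  p ^ U.card * (1 - p) ^ (Fintype.card V - U.card)

lemma subsetWeight_nonneg {V : Type*} [Fintype V] {p : ℝ} (hp : 0 < p) (hp1 : p ≤ 1)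
    (U : Finset V) : 0 ≤ subsetWeight p U :=
  mul_nonneg (pow_nonneg hp.le _) (pow_nonneg (by linarith) _)

lemma sum_subsetWeight {V : Type*} [Fintype V] (p : ℝ) :
    ∑ U : Finset V, subsetWeight p U = 1 := by
  have := Finset.sum_pow_mul_eq_add_pow p (1 - p) (Finset.univ : Finset V)
  simpa [subsetWeight] using this

lemma vertexSubsetProb_pair {V : Type*} [Fintype V] (p : ℝ) {x y : V} (hxy : x ≠ y) :
    vertexSubsetProb p (fun U : Finset V => x ∈ U ∧ y ∈ U) = p ^ 2 := by
  classical
  -- Expand `∏ v, (p + g v)` where `g` is `0` at `x` and `y`, and `1 - p` elsewhere.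
  have h := Finset.prod_add (fun _ : V => p)
    (fun v => if v ∈ ({x, y} : Finset V) then 0 else 1 - p) Finset.univ
  have hl : ∏ v : V, (p + if v ∈ ({x, y} : Finset V) then 0 else 1 - p) = p ^ 2 := by
    have : ∀ v : V, (p + if v ∈ ({x, y} : Finset V) then 0 else 1 - p)
        = if v ∈ ({x, y} : Finset V) then p else 1 := by
      intro v; split_ifs <;> ring
    rw [Finset.prod_congr rfl fun v _ => this v, Finset.prod_ite_mem]
    simp [Finset.card_pair hxy]
  rw [hl] at h
  rw [h, vertexSubsetProb, Finset.powerset_univ]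
  refine Finset.sum_congr rfl fun U _ => ?_
  split_ifs with hU
  · rw [Finset.prod_const, Finset.prod_congr rfl (g := fun _ => 1 - p), Finset.prod_const,
      Finset.card_univ_sdiff]
    intro v hv
    rw [if_neg]
    simp only [Finset.mem_sdiff, Finset.mem_univ, true_and] at hv
    simp only [Finset.mem_insert, Finset.mem_singleton]
    rintro (rfl | rfl)
    · exact hv hU.1
    · exact hv hU.2
  · symm
    refine mul_eq_zero_of_right _ ?_
    by_cases hx : x ∈ U
    · exact Finset.prod_eq_zero (i := y) (by simpa using fun h => hU ⟨hx, h⟩) (by simp)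
    · exact Finset.prod_eq_zero (i := x) (by simpa using hx) (by simp)

open Classical in
/-- The ends of a non-admissible edge both lie in `U` but lack `k` disjoint paths there with
probability at least `p²ε`. -/
lemma le_bad_weight {V : Type*} [Fintype V] {G : SimpleGraph V} {p ε : ℝ} {k : ℕ} {x y : V}
    (hxy : x ≠ y) (h : ¬ EdgeAdmissible G p ε k x y) :
    p ^ 2 * ε ≤ ∑ U : Finset V,
      if x ∈ U ∧ y ∈ U ∧ ¬ HasKDisjointPaths G U x y k then subsetWeight p U else 0 := by
  unfold EdgeAdmissible at h
  have h1 := vertexSubsetProb_pair p hxy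
  have h2 : vertexSubsetProb p (fun U : Finset V => x ∈ U ∧ y ∈ U) =
      vertexSubsetProb p (fun U : Finset V => x ∈ U ∧ y ∈ U ∧ HasKDisjointPaths G (↑U) x y k) +
      ∑ U : Finset V,
        if x ∈ U ∧ y ∈ U ∧ ¬ HasKDisjointPaths G U x y k then subsetWeight p U else 0 := by
    simp only [vertexSubsetProb, ← Finset.sum_add_distrib]
    refine Finset.sum_congr rfl fun U _ => ?_
    by_cases hx : x ∈ U <;> by_cases hy : y ∈ U <;>
      by_cases hk : HasKDisjointPaths G U x y k <;> simp [hx, hy, hk, subsetWeight]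
  rw [h1] at h h2
  nlinarith

lemma EdgeAdmissible.symm {V : Type*} [Fintype V] {G : SimpleGraph V} {p ε : ℝ} {k : ℕ} {x y : V}
    (h : EdgeAdmissible G p ε k x y) : EdgeAdmissible G p ε k y x := by
  unfold EdgeAdmissible at h ⊢
  have h1 : (fun U : Finset V => y ∈ U ∧ x ∈ U) = fun U : Finset V => x ∈ U ∧ y ∈ U :=
    funext fun U => propext and_comm
  have h2 : (fun U : Finset V => y ∈ U ∧ x ∈ U ∧ HasKDisjointPaths G (↑U) y x k) =
      fun U : Finset V => x ∈ U ∧ y ∈ U ∧ HasKDisjointPaths G (↑U) x y k :=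
    funext fun U => propext ⟨fun h => ⟨h.2.1, h.1, h.2.2.symm⟩, fun h => ⟨h.2.1, h.1, h.2.2.symm⟩⟩
  rwa [h1, h2]

/-- The spanning subgraph of `G` formed by its non-admissible edges. -/
def nonAdmissibleGraph {V : Type*} [Fintype V] (G : SimpleGraph V) (p ε : ℝ) (k : ℕ) :
    SimpleGraph V where
  Adj x y := G.Adj x y ∧ ¬ EdgeAdmissible G p ε k x y
  symm := ⟨fun _ _ h => ⟨h.1.symm, fun h' => h.2 h'.symm⟩⟩
  loopless := ⟨fun _ h => G.irrefl h.1⟩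

/-- all but at most `(2k/(p²ε))·n` edges of a graph `G` on `n` vertices are
`(p, ε, k)`-admissible. -/
theorem statement0 {V : Type*} [Fintype V] (p ε : ℝ) (hp : 0 < p) (hp1 : p ≤ 1)
    (hε : 0 < ε) (hε1 : ε ≤ 1) (k n : ℕ) (hk : 0 < k) (hn : 0 < n)
    (hV : Fintype.card V = n) (G : SimpleGraph V) :
    (Nat.card {s : Sym2 V // s ∈ G.edgeSet ∧
        ¬ ∀ x y : V, s = s(x, y) → EdgeAdmissible G p ε k x y} : ℝ)
      ≤ (2 * k / (p ^ 2 * ε)) * n := by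
  classical
  set N := nonAdmissibleGraph G p ε k with hN
  have hNadj : ∀ x y, N.Adj x y ↔ G.Adj x y ∧ ¬ EdgeAdmissible G p ε k x y := fun _ _ => Iff.rfl
  have hset : ∀ s : Sym2 V, (s ∈ G.edgeSet ∧
      ¬ ∀ x y : V, s = s(x, y) → EdgeAdmissible G p ε k x y) ↔ s ∈ N.edgeFinset := by
    intro s
    rw [SimpleGraph.mem_edgeFinset]
    induction s with
    | _ x y =>
      rw [SimpleGraph.mem_edgeSet, SimpleGraph.mem_edgeSet, hNadj]
      refine and_congr_right fun _ => not_congr ⟨fun h => h x y rfl, fun h a b hab => ?_⟩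
      rcases Sym2.eq_iff.1 hab with ⟨rfl, rfl⟩ | ⟨rfl, rfl⟩
      · exact h
      · exact h.symm
  have hcard : Nat.card {s : Sym2 V // s ∈ G.edgeSet ∧
      ¬ ∀ x y : V, s = s(x, y) → EdgeAdmissible G p ε k x y} = N.edgeFinset.card := by
    rw [Nat.card_congr (Equiv.subtypeEquivRight hset)]
    exact Nat.card_eq_fintype_card.trans (Fintype.card_coe _)
  rw [hcard]
  set Q : Finset (V × V) := Finset.univ.filter fun q => N.Adj q.1 q.2 with hQ
  have htwo : 2 * N.edgeFinset.card = Q.card := SimpleGraph.two_mul_card_edgeFinset (G := N)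
  -- Double counting: the expected number of bad ordered pairs in `G[U]`.
  have hmain : (Q.card : ℝ) * (p ^ 2 * ε) ≤ 4 * k * n := by
    calc (Q.card : ℝ) * (p ^ 2 * ε) = ∑ q ∈ Q, p ^ 2 * ε := by simp
      _ ≤ ∑ q ∈ Q, ∑ U : Finset V,
          if q.1 ∈ U ∧ q.2 ∈ U ∧ ¬ HasKDisjointPaths G U q.1 q.2 k
            then subsetWeight p U else 0 := by
        refine Finset.sum_le_sum fun q hq => ?_
        have hq' : N.Adj q.1 q.2 := (Finset.mem_filter.1 hq).2
        exact le_bad_weight hq'.ne hq'.2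
      _ = ∑ U : Finset V, ∑ q ∈ Q,
          if q.1 ∈ U ∧ q.2 ∈ U ∧ ¬ HasKDisjointPaths G U q.1 q.2 k
            then subsetWeight p U else 0 := Finset.sum_comm
      _ ≤ ∑ U : Finset V, subsetWeight p U * (4 * k * n) := by
        refine Finset.sum_le_sum fun U _ => ?_
        rw [← Finset.sum_filter, Finset.sum_const, nsmul_eq_mul, mul_comm]
        refine mul_le_mul_of_nonneg_left ?_ (subsetWeight_nonneg hp hp1 U)
        have hle : (Q.filter fun q => q.1 ∈ U ∧ q.2 ∈ U ∧
            ¬ HasKDisjointPaths G U q.1 q.2 k).card ≤ 4 * k * n := by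
          refine (Finset.card_le_card ?_).trans ((card_bad_pairs_le G k U).trans
            (Nat.mul_le_mul_left _ (hV ▸ Finset.card_le_univ U)))
          intro q hq
          obtain ⟨hq, h1, h2, h3⟩ := Finset.mem_filter.1 hq
          exact mem_pairsIn.2 ⟨h1, h2, ((Finset.mem_filter.1 hq).2 : N.Adj q.1 q.2).1, h3⟩
        exact_mod_cast hle
      _ = 4 * k * n := by rw [← Finset.sum_mul, sum_subsetWeight, one_mul]
  have htwo' : (2 : ℝ) * N.edgeFinset.card = Q.card := by exact_mod_cast htwo
  have hpos : 0 < p ^ 2 * ε := by positivity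
  rw [div_mul_eq_mul_div, le_div_iff₀ hpos]
  nlinarith
end

section
/- Let r and k be positive integers. Then there exists a constant c = c(r,k) > 0 such that the following holds: if G is a graph on n vertices equipped with a diverse r-set coloring which contains no rainbow cycle of length at most 2k, then G has at most c·n^{1+1/k} edges. -/
/-!
Counting closed walks with the normalized adjacency matrix `M = D^{-1/2} A D^{-1/2}` avoids any
regularity assumption on `G`. Let `t j = tr (M ^ (2 * j))`, the total weight of the closed walks of
length `2 * j`. Since `M` fixes the vector `√deg`, `1 ≤ t k` (`one_le_closedSum`), while
`t 1 ≤ n / δ` when all degrees are at least `δ` (`closedSum_one_le`).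

Say that two vertices are in conflict if their colors intersect. A closed walk of length
`2 * j ≥ 4` without conflict between distinct positions is a rainbow cycle, so if there is none, `t j`
is at most the sum, over pairs of positions, of the weight of the walks with a conflict at
that pair. By rotation, the conflict is between `u` and a vertex of the walk of length `j` starting
at `u`. Diversity gives each vertex at most `r` neighbors in conflict with a given vertex, so given
the last `j - 1` steps of this walk there are at most `r` choices for `u`; Cauchy–Schwarz
then bounds the weight by `√(r / δ * t (j - 1) * t j)` (`conflictSum_sq_le`). Hence
`t j ≤ 16 j⁴ r / δ * t (j - 1)` (`closedSum_step`), and iterating up to `k` gives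
`δ ^ k ≤ n * (16 k⁴ r) ^ k` (`minDegree_bound`).

The edge bound follows by induction on `n`, deleting a vertex of degree at most
`16 k⁴ r n ^ (1 / k)` (`card_edges_le`).
-/

/-- An `r`-set coloring `f` of the vertices of `G` is diverse if any two distinct vertices
that are adjacent or have a common neighbor receive disjoint colors. -/
def DiverseColoring {V X : Type*} [DecidableEq X] (G : SimpleGraph V)
    (f : V → Finset X) : Prop :=
  ∀ v w : V, v ≠ w → (G.Adj v w ∨ ∃ u, G.Adj v u ∧ G.Adj w u) → Disjoint (f v) (f w)

/-- `G` contains a rainbow cycle of length `ℓ` with respect to the set coloring `f`: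
a cycle of length `ℓ` any two of whose (distinct) vertices have disjoint colors. -/
def HasRainbowCycle {V X : Type*} [DecidableEq X] (G : SimpleGraph V)
    (f : V → Finset X) (ℓ : ℕ) : Prop :=
  ∃ (v : V) (c : G.Walk v v), c.IsCycle ∧ c.length = ℓ ∧
    ∀ a ∈ c.support, ∀ b ∈ c.support, a ≠ b → Disjoint (f a) (f b)

namespace RainbowCycles

set_option linter.unusedSectionVars false

open Finset

/-! ### Weighted sums over walks -/

section WalkSum

variable {V : Type} [Fintype V] [DecidableEq V] (M : Matrix V V ℝ)

/-- The sum, over all walks `x = w 0, w 1, …, w m`, of `φ w` times the product of the weights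
`M (w i) (w (i + 1))`. A walk is encoded as an infinite sequence that is constant from index `m`
on, so that its terms and its shifts can be addressed without index bounds. -/
def walkSum : ℕ → V → ((ℕ → V) → ℝ) → ℝ
  | 0, x, φ => φ (fun _ => x)
  | m + 1, x, φ => ∑ y, M x y * walkSum m y (fun w => φ (fun n => Nat.casesOn n x w))

lemma walkSum_mono (R : V → V → Prop) (hM : ∀ x y, 0 ≤ M x y) (hR : ∀ x y, M x y ≠ 0 → R x y)
    (m : ℕ) : ∀ (x : V) (φ ψ : (ℕ → V) → ℝ),
      (∀ w : ℕ → V, w 0 = x → (∀ i < m, R (w i) (w (i + 1))) → φ w ≤ ψ w) →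
      walkSum M m x φ ≤ walkSum M m x ψ := by
  induction m with
  | zero => intro x φ ψ h; exact h _ rfl (by simp)
  | succ m ih =>
    intro x φ ψ h
    refine Finset.sum_le_sum fun y _ => ?_
    by_cases h0 : M x y = 0
    · simp [h0]
    · refine mul_le_mul_of_nonneg_left (ih y _ _ fun w hw hw' => h _ rfl ?_) (hM x y)
      rintro (_ | i) hi
      · simpa [hw] using hR x y h0
      · exact hw' i (by omega)

lemma walkSum_head (m : ℕ) : ∀ (x : V) (ψ : V → (ℕ → V) → ℝ),
    walkSum M m x (fun w => ψ (w 0) w) = walkSum M m x (ψ x) := by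
  cases m <;> exact fun _ _ => rfl

lemma walkSum_finset_sum {ι : Type} (s : Finset ι) (m : ℕ) :
    ∀ (x : V) (φ : ι → (ℕ → V) → ℝ),
      walkSum M m x (fun w => ∑ i ∈ s, φ i w) = ∑ i ∈ s, walkSum M m x (φ i) := by
  induction m with
  | zero => intro x φ; rfl
  | succ m ih =>
    intro x φ
    simp only [walkSum, ih, Finset.mul_sum]
    rw [Finset.sum_comm]

/-- Forgetting the first `i` steps of the walk amounts to a matrix power. -/
lemma walkSum_shift (m i : ℕ) : ∀ (x : V) (ψ : (ℕ → V) → ℝ),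
    walkSum M (i + m) x (fun w => ψ (fun n => w (n + i))) =
      ∑ u, (M ^ i) x u * walkSum M m u ψ := by
  induction i with
  | zero => intro x ψ; simp [Matrix.one_apply]
  | succ i ih =>
    intro x ψ
    rw [show i + 1 + m = (i + m) + 1 by omega]
    have h : ∀ y, walkSum M (i + m) y (fun w => ψ (fun n => w (n + i))) = _ := fun y => ih y ψ
    calc walkSum M (i + m + 1) x (fun w => ψ (fun n => w (n + (i + 1))))
        = ∑ y, M x y * walkSum M (i + m) y (fun w => ψ (fun n => w (n + i))) := rfl
      _ = _ := by
        simp only [h, pow_succ', Matrix.mul_apply, Finset.mul_sum, Finset.sum_mul, mul_assoc]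
        rw [Finset.sum_comm]

lemma walkSum_last (m : ℕ) (x : V) (g : V → ℝ) :
    walkSum M m x (fun w => g (w m)) = ∑ u, (M ^ m) x u * g u := by
  have := walkSum_shift M 0 m x (fun w => g (w 0))
  simpa [walkSum] using this

lemma trace_eq_walkSum (m : ℕ) :
    (M ^ m).trace = ∑ x, walkSum M m x (fun w => if w m = x then 1 else 0) := by
  refine Finset.sum_congr rfl fun x _ => ?_
  rw [walkSum_last M m x (fun v => if v = x then 1 else 0)]
  simp

/-- The weight of the pairs of walks `u → v` and `v → u`, of lengths `a` and `b`, whose endpoints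
`u`, `v` are counted with the weight `c u v`. -/
def conflictSum (c : V → V → ℝ) (a b : ℕ) : ℝ :=
  ∑ u, ∑ v, c u v * (M ^ a) u v * (M ^ b) v u

lemma conflictSum_comm (c : V → V → ℝ) (hc : ∀ u v, c u v = c v u) (a b : ℕ) :
    conflictSum M c a b = conflictSum M c b a := by
  unfold conflictSum
  rw [Finset.sum_comm]
  refine Finset.sum_congr rfl fun u _ => Finset.sum_congr rfl fun v _ => ?_
  rw [hc v u]; ring

/-- By cyclic symmetry, the closed walks weighted by a function of the vertices at positions
`i` and `i + a` only see the two arcs between these positions. -/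
lemma sum_walkSum_conflict (c : V → V → ℝ) (i a b : ℕ) :
    ∑ x, walkSum M (i + (a + b)) x
        (fun w => if w (i + (a + b)) = x then c (w i) (w (i + a)) else 0)
      = conflictSum M c a (b + i) := by
  have h1 : ∀ x u, walkSum M (a + b) u (fun w => if w (a + b) = x then c u (w a) else 0)
      = ∑ v, (M ^ a) u v * ((M ^ b) v x * c u v) := by
    intro x u
    have := walkSum_shift M b a u (fun w => if w b = x then c u (w 0) else 0)
    simp only [zero_add, add_comm b a] at this
    rw [this]
    refine Finset.sum_congr rfl fun v _ => ?_
    rw [walkSum_head M b v (fun z w => if w b = x then c u z else 0),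
      walkSum_last M b v (fun z => if z = x then c u v else 0)]
    simp
  have h2 : ∀ x, walkSum M (i + (a + b)) x
        (fun w => if w (i + (a + b)) = x then c (w i) (w (i + a)) else 0)
      = ∑ u, (M ^ i) x u * ∑ v, (M ^ a) u v * ((M ^ b) v x * c u v) := by
    intro x
    have := walkSum_shift M (a + b) i x (fun w => if w (a + b) = x then c (w 0) (w a) else 0)
    simp only [zero_add, add_comm (a + b) i, add_comm a i] at this
    rw [this]
    refine Finset.sum_congr rfl fun u _ => ?_
    rw [walkSum_head M (a + b) u (fun z w => if w (a + b) = x then c z (w a) else 0), h1]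
  simp only [h2, conflictSum, pow_add M b i, Matrix.mul_apply, Finset.mul_sum]
  rw [Finset.sum_comm]
  refine Finset.sum_congr rfl fun u _ => ?_
  rw [Finset.sum_comm]
  refine Finset.sum_congr rfl fun v _ => Finset.sum_congr rfl fun x _ => ?_
  ring

end WalkSum

/-! ### Rainbow cycles from closed walks -/

section Graph

variable {V X : Type}

lemma exists_walk_of_seq (G : SimpleGraph V) (m : ℕ) : ∀ w : ℕ → V,
    (∀ i < m, G.Adj (w i) (w (i + 1))) →
    ∃ p : G.Walk (w 0) (w m), p.length = m ∧ p.support = (List.range (m + 1)).map w := by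
  induction m with
  | zero => intro w _; exact ⟨.nil, rfl, rfl⟩
  | succ m ih =>
    intro w h
    obtain ⟨p, hp, hs⟩ := ih (fun n => w (n + 1)) (fun i hi => h (i + 1) (by omega))
    refine ⟨.cons (h 0 (by omega)) p, by simp [hp], ?_⟩
    rw [SimpleGraph.Walk.support_cons, hs, List.range_succ_eq_map (n := m + 1)]
    simp [Function.comp_def]

/-- A closed walk of length `m ≥ 3` whose vertices at distinct positions have disjoint nonempty
colors is a rainbow cycle. -/
lemma hasRainbowCycle_of_seq [DecidableEq X] (G : SimpleGraph V) (f : V → Finset X)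
    (hf : ∀ v, (f v).Nonempty) {m : ℕ} (hm : 3 ≤ m) (w : ℕ → V) (hw : w m = w 0)
    (hadj : ∀ i < m, G.Adj (w i) (w (i + 1)))
    (hdisj : ∀ i' < m, ∀ i < i', Disjoint (f (w i)) (f (w i'))) : HasRainbowCycle G f m := by
  obtain ⟨p, hp, hs⟩ := exists_walk_of_seq G m w hadj
  have hne : ∀ i' < m, ∀ i < i', w i ≠ w i' := by
    intro i' hi' i hi h
    have := hdisj i' hi' i hi
    rw [h, disjoint_self] at this
    exact (hf _).ne_empty this
  have hmem : ∀ a ∈ p.support, ∃ i < m, w i = a := by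
    intro a ha
    rw [hs] at ha
    obtain ⟨i, hi, rfl⟩ := List.mem_map.1 ha
    rw [List.mem_range] at hi
    rcases Nat.lt_or_ge i m with h | h
    · exact ⟨i, h, rfl⟩
    · exact ⟨0, by omega, by rw [← hw]; congr 1; omega⟩
  refine ⟨w 0, p.copy rfl hw, ?_, by simpa using hp, ?_⟩
  · rw [SimpleGraph.Walk.isCycle_iff_isPath_tail_and_le_length]
    refine ⟨?_, by simp [hp, hm]⟩
    have hnn : ¬ (p.copy rfl hw).Nil := by
      rw [← SimpleGraph.Walk.length_eq_zero_iff]; simp [hp]; omega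
    rw [SimpleGraph.Walk.isPath_def, SimpleGraph.Walk.support_tail_of_not_nil _ hnn,
      SimpleGraph.Walk.support_copy, hs, List.range_succ_eq_map, List.map_cons, List.tail_cons,
      List.map_map]
    refine List.Nodup.map_on ?_ List.nodup_range
    intro i hi i' hi' h
    simp only [List.mem_range, Function.comp_apply] at hi hi' h
    by_contra hii
    -- the last position `m` carries the vertex `w 0`
    have key : ∀ a b : ℕ, a < b → b < m → w (a + 1) ≠ w (b + 1) := by
      intro a b hab hb h
      rcases Nat.lt_or_ge (b + 1) m with hb' | hb'
      · exact hne _ hb' _ (by omega) h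
      · rw [show b + 1 = m by omega, hw] at h
        exact hne (a + 1) (by omega) 0 (by omega) h.symm
    rcases lt_or_gt_of_ne hii with h' | h'
    · exact key _ _ h' hi' h
    · exact key _ _ h' hi h.symm
  · intro a ha b hb hab
    rw [SimpleGraph.Walk.support_copy] at ha hb
    obtain ⟨i, hi, rfl⟩ := hmem a ha
    obtain ⟨i', hi', rfl⟩ := hmem b hb
    rcases lt_trichotomy i i' with h | h | h
    · exact hdisj _ hi' _ h
    · exact absurd (by rw [h]) hab
    · exact (hdisj _ hi _ h).symm

/-- In a diverse coloring, each of the `r` elements of `f v` belongs to the color of at most one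
neighbor of `y`. -/
lemma card_conflict_le [Fintype V] [DecidableEq X] (G : SimpleGraph V) [DecidableRel G.Adj]
    (f : V → Finset X) {r : ℕ} (hr : ∀ v, (f v).card = r) (hd : DiverseColoring G f) (y v : V) :
    (univ.filter fun u => G.Adj u y ∧ ¬ Disjoint (f u) (f v)).card ≤ r := by
  classical
  rw [← hr v]
  have hex : ∀ u, ¬ Disjoint (f u) (f v) → ∃ x, x ∈ f u ∧ x ∈ f v := by
    intro u hu; exact Finset.not_disjoint_iff.1 hu
  rcases isEmpty_or_nonempty X with hX | hX
  · rw [Finset.filter_false_of_mem]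
    · simp
    · rintro u - ⟨-, hu⟩
      exact hX.elim (hex u hu).choose
  choose! g hg using hex
  refine Finset.card_le_card_of_injOn g (fun u hu => ?_) ?_
  · simp only [Finset.coe_filter, Finset.mem_univ, true_and, Set.mem_ofPred_eq] at hu
    exact (hg u hu.2).2
  · intro u hu u' hu' h
    simp only [Finset.coe_filter, Finset.mem_univ, true_and, Set.mem_ofPred_eq] at hu hu'
    by_contra hne
    refine Finset.disjoint_left.1 (hd u u' hne (Or.inr ⟨y, hu.1, hu'.1⟩)) (hg u hu.2).1 ?_
    rw [h]; exact (hg u' hu'.2).1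

/-! ### Closed walks in the normalized adjacency matrix -/

variable [Fintype V] [DecidableEq V] (G : SimpleGraph V) [DecidableRel G.Adj]

/-- The symmetrically normalized adjacency matrix `D^{-1/2} A D^{-1/2}` of `G`. -/
noncomputable def normAdj : Matrix V V ℝ :=
  Matrix.of fun x y => if G.Adj x y then 1 / (√(G.degree x) * √(G.degree y)) else 0

lemma normAdj_apply (x y : V) :
    normAdj G x y = (if G.Adj x y then 1 else 0) / (√(G.degree x) * √(G.degree y)) := by
  simp only [normAdj, Matrix.of_apply]; split_ifs <;> simp

lemma normAdj_nonneg (x y : V) : 0 ≤ normAdj G x y := by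
  rw [normAdj_apply]; split_ifs <;> positivity

lemma normAdj_pow_nonneg (m : ℕ) : ∀ x y, 0 ≤ (normAdj G ^ m) x y := by
  induction m with
  | zero => intro x y; rw [pow_zero, Matrix.one_apply]; split_ifs <;> simp
  | succ m ih =>
    intro x y
    rw [pow_succ, Matrix.mul_apply]
    exact Finset.sum_nonneg fun z _ => mul_nonneg (ih x z) (normAdj_nonneg G z y)

lemma normAdj_transpose : (normAdj G).transpose = normAdj G := by
  ext x y
  rw [Matrix.transpose_apply, normAdj_apply, normAdj_apply, mul_comm]
  simp only [G.adj_comm]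

lemma normAdj_pow_symm (m : ℕ) (x y : V) : (normAdj G ^ m) x y = (normAdj G ^ m) y x := by
  have : (normAdj G ^ m).transpose = normAdj G ^ m := by
    rw [Matrix.transpose_pow, normAdj_transpose]
  conv_lhs => rw [← this]
  rfl

/-- The total weight of the closed walks of length `2 * j`. -/
noncomputable def closedSum (j : ℕ) : ℝ := (normAdj G ^ (2 * j)).trace

lemma closedSum_eq (j : ℕ) : closedSum G j = ∑ x, ∑ y, ((normAdj G ^ j) x y) ^ 2 := by
  refine Finset.sum_congr rfl fun x _ => ?_
  rw [two_mul, pow_add, Matrix.diag_apply, Matrix.mul_apply]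
  refine Finset.sum_congr rfl fun y _ => ?_
  rw [normAdj_pow_symm G j y x, sq]

lemma closedSum_nonneg (j : ℕ) : 0 ≤ closedSum G j := by
  rw [closedSum_eq]; positivity

lemma sum_adj (x : V) : ∑ y, (if G.Adj x y then (1 : ℝ) else 0) = G.degree x := by
  rw [Finset.sum_boole, ← SimpleGraph.card_neighborFinset_eq_degree,
    SimpleGraph.neighborFinset_eq_filter]

/-- The vector `√deg` is fixed by the normalized adjacency matrix, so that the latter has an
eigenvalue `1`. -/
lemma one_le_closedSum [Nonempty V] (hpos : ∀ x, 0 < G.degree x) (j : ℕ) :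
    1 ≤ closedSum G j := by
  have hd : ∀ x, (0 : ℝ) < G.degree x := fun x => by exact_mod_cast hpos x
  have hfix : ∀ m x, ∑ y, (normAdj G ^ m) x y * √(G.degree y) = √(G.degree x) := by
    intro m
    induction m with
    | zero => intro x; simp [Matrix.one_apply]
    | succ m ih =>
      intro x
      have h1 : ∀ y, (normAdj G ^ (m + 1)) x y * √(G.degree y)
          = ∑ z, normAdj G x z * ((normAdj G ^ m) z y * √(G.degree y)) := by
        intro y; rw [pow_succ', Matrix.mul_apply, Finset.sum_mul]; simp only [mul_assoc]
      simp only [h1]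
      rw [Finset.sum_comm]
      simp only [← Finset.mul_sum, ih]
      have h2 : ∀ z, normAdj G x z * √(G.degree z)
          = (if G.Adj x z then (1 : ℝ) else 0) * (1 / √(G.degree x)) := by
        intro z
        have := Real.sqrt_pos.2 (hd z)
        rw [normAdj_apply]; field_simp
      simp only [h2, ← Finset.sum_mul, sum_adj]
      rw [mul_one_div, Real.div_sqrt]
  set D : ℝ := ∑ x, (G.degree x : ℝ) with hD
  have hDpos : 0 < D := Finset.sum_pos (fun x _ => hd x) Finset.univ_nonempty
  have hsq : ∀ x, √(G.degree x : ℝ) ^ 2 = G.degree x := fun x => Real.sq_sqrt (hd x).le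
  have hquad : ∑ q : V × V, (√(G.degree q.1) * √(G.degree q.2)) * (normAdj G ^ j) q.1 q.2 = D := by
    rw [Fintype.sum_prod_type, hD]
    refine Finset.sum_congr rfl fun x _ => ?_
    rw [← hsq, sq]
    conv_rhs => rw [← hfix j x, Finset.mul_sum, hfix j x]
    exact Finset.sum_congr rfl fun y _ => by ring
  have hnorm : ∑ q : V × V, (√(G.degree q.1 : ℝ) * √(G.degree q.2)) ^ 2 = D ^ 2 := by
    rw [Fintype.sum_prod_type, sq D, hD, Finset.sum_mul_sum]
    simp only [mul_pow, hsq]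
  have hcs := Finset.sum_mul_sq_le_sq_mul_sq (univ : Finset (V × V))
    (fun q => √(G.degree q.1 : ℝ) * √(G.degree q.2)) (fun q => (normAdj G ^ j) q.1 q.2)
  rw [hquad, hnorm, Fintype.sum_prod_type, ← closedSum_eq] at hcs
  exact le_of_mul_le_mul_left (by simpa using hcs) (pow_pos hDpos 2)

lemma closedSum_one_le {δ : ℝ} (hδ : 0 < δ) (hdeg : ∀ x, δ ≤ G.degree x) :
    closedSum G 1 ≤ Fintype.card V / δ := by
  have h : ∀ x, ∑ y, ((normAdj G ^ 1) x y) ^ 2 ≤ 1 / δ := by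
    intro x
    have hx : (0 : ℝ) < G.degree x := hδ.trans_le (hdeg x)
    calc ∑ y, ((normAdj G ^ 1) x y) ^ 2
        ≤ ∑ y, (if G.Adj x y then (1 : ℝ) else 0) * (1 / (G.degree x * δ)) := by
          refine Finset.sum_le_sum fun y _ => ?_
          have hy : (0 : ℝ) < G.degree y := hδ.trans_le (hdeg y)
          rw [pow_one, normAdj_apply, div_pow, mul_pow, Real.sq_sqrt hx.le, Real.sq_sqrt hy.le]
          split_ifs
          · rw [one_pow, one_mul]
            have := hdeg y
            gcongr
          · simp
      _ = 1 / δ := by rw [← Finset.sum_mul, sum_adj]; field_simp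
  rw [closedSum_eq]
  calc _ ≤ ∑ _x : V, 1 / δ := Finset.sum_le_sum fun x _ => h x
    _ = _ := by simp [div_eq_mul_inv]

/-- The main estimate. Let `y` be the second vertex of the short arc of length `p + 1` from `u`, and
`z` the vertex opposite to `u`. The walk passes from `y` to `z` in `p + q` steps, and `u` is one of at most `r`
neighbors of `y` in conflict with a prescribed vertex of this walk. The bound then follows from
the Cauchy–Schwarz inequality over the triples `(u, y, z)`. -/
lemma conflictSum_sq_le {δ : ℝ} (hδ : 0 < δ) (hdeg : ∀ x, δ ≤ G.degree x)
    (c : V → V → ℝ) (hc0 : ∀ u v, 0 ≤ c u v) (hc1 : ∀ u v, c u v ≤ 1) (r : ℝ)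
    (hcr : ∀ y v, ∑ u, (if G.Adj u y then (1 : ℝ) else 0) * c u v ≤ r) (p q : ℕ) :
    (conflictSum (normAdj G) c (p + 1) (q + (p + q + 1))) ^ 2
      ≤ r / δ * closedSum G (p + q) * closedSum G (p + q + 1) := by
  set M := normAdj G with hM
  have hd : ∀ x, (0 : ℝ) < G.degree x := fun x => hδ.trans_le (hdeg x)
  set A : V → V → ℝ := fun u y => if G.Adj u y then 1 else 0 with hA
  have hA0 : ∀ u y, 0 ≤ A u y := by intro u y; simp only [hA]; split_ifs <;> simp
  have hA2 : ∀ u y, A u y ^ 2 = A u y := by intro u y; simp only [hA]; split_ifs <;> simp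
  set F : V → V → V → ℝ := fun u y z => ∑ v, c u v * ((M ^ p) y v * (M ^ q) v z) with hF
  have hpq : ∀ y z v, 0 ≤ (M ^ p) y v * (M ^ q) v z := fun y z v =>
    mul_nonneg (normAdj_pow_nonneg G p y v) (normAdj_pow_nonneg G q v z)
  have hF0 : ∀ u y z, 0 ≤ F u y z := fun u y z =>
    Finset.sum_nonneg fun v _ => mul_nonneg (hc0 u v) (hpq y z v)
  have hFle : ∀ u y z, F u y z ≤ (M ^ (p + q)) y z := by
    intro u y z
    rw [pow_add, Matrix.mul_apply]
    exact Finset.sum_le_sum fun v _ => mul_le_of_le_one_left (hpq y z v) (hc1 u v)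
  have hsum : ∀ y z, ∑ u, A u y * F u y z ≤ r * (M ^ (p + q)) y z := by
    intro y z
    calc ∑ u, A u y * F u y z
        = ∑ v, (∑ u, A u y * c u v) * ((M ^ p) y v * (M ^ q) v z) := by
          simp only [hF, Finset.mul_sum, Finset.sum_mul]
          rw [Finset.sum_comm]
          simp only [mul_assoc]
      _ ≤ ∑ v, r * ((M ^ p) y v * (M ^ q) v z) :=
          Finset.sum_le_sum fun v _ => mul_le_mul_of_nonneg_right (hcr y v) (hpq y z v)
      _ = _ := by rw [← Finset.mul_sum, pow_add, Matrix.mul_apply]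
  have hsplit : conflictSum M c (p + 1) (q + (p + q + 1))
      = ∑ t : V × V × V, (A t.1 t.2.1 * F t.1 t.2.1 t.2.2 / √(G.degree t.2.1))
          * (A t.1 t.2.1 * (M ^ (p + q + 1)) t.2.2 t.1 / √(G.degree t.1)) := by
    simp only [Fintype.sum_prod_type]
    unfold conflictSum
    refine Finset.sum_congr rfl fun u _ => ?_
    calc ∑ v, c u v * (M ^ (p + 1)) u v * (M ^ (q + (p + q + 1))) v u
        = ∑ v, ∑ y, ∑ z, M u y * (c u v * ((M ^ p) y v * (M ^ q) v z))
            * (M ^ (p + q + 1)) z u := by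
          refine Finset.sum_congr rfl fun v _ => ?_
          rw [pow_succ' M p, pow_add M q, Matrix.mul_apply, Matrix.mul_apply, mul_assoc,
            Finset.sum_mul_sum, Finset.mul_sum]
          refine Finset.sum_congr rfl fun y _ => ?_
          rw [Finset.mul_sum]
          exact Finset.sum_congr rfl fun z _ => by ring
      _ = ∑ y, ∑ z, M u y * F u y z * (M ^ (p + q + 1)) z u := by
          rw [Finset.sum_comm]
          refine Finset.sum_congr rfl fun y _ => ?_
          rw [Finset.sum_comm]
          refine Finset.sum_congr rfl fun z _ => ?_
          simp only [hF, Finset.mul_sum, Finset.sum_mul]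
      _ = _ := by
          refine Finset.sum_congr rfl fun y _ => Finset.sum_congr rfl fun z _ => ?_
          have : M u y = A u y ^ 2 / (√(G.degree u) * √(G.degree y)) := by
            rw [hA2, hM, normAdj_apply]
          rw [this]
          ring
  rw [hsplit]
  refine (Finset.sum_mul_sq_le_sq_mul_sq _ _ _).trans ?_
  have hleft : ∑ t : V × V × V, (A t.1 t.2.1 * F t.1 t.2.1 t.2.2 / √(G.degree t.2.1)) ^ 2
      ≤ r / δ * closedSum G (p + q) := by
    simp only [Fintype.sum_prod_type, closedSum_eq, Finset.mul_sum]
    rw [Finset.sum_comm]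
    refine Finset.sum_le_sum fun y _ => ?_
    rw [Finset.sum_comm]
    refine Finset.sum_le_sum fun z _ => ?_
    have hN := normAdj_pow_nonneg G (p + q) y z
    calc ∑ u, (A u y * F u y z / √(G.degree y)) ^ 2
        ≤ ∑ u, (A u y * F u y z) * ((M ^ (p + q)) y z / δ) := by
          refine Finset.sum_le_sum fun u _ => ?_
          rw [div_pow, Real.sq_sqrt (hd y).le, mul_pow, hA2, mul_div_assoc, mul_assoc]
          refine mul_le_mul_of_nonneg_left ?_ (hA0 u y)
          rw [sq, mul_div_assoc]
          exact mul_le_mul_of_nonneg_left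
            (div_le_div₀ hN (hFle u y z) hδ (hdeg y)) (hF0 u y z)
      _ ≤ (r * (M ^ (p + q)) y z) * ((M ^ (p + q)) y z / δ) := by
          rw [← Finset.sum_mul]
          exact mul_le_mul_of_nonneg_right (hsum y z) (div_nonneg hN hδ.le)
      _ = r / δ * (M ^ (p + q)) y z ^ 2 := by ring
  have hright : ∑ t : V × V × V, (A t.1 t.2.1 * (M ^ (p + q + 1)) t.2.2 t.1 / √(G.degree t.1)) ^ 2
      = closedSum G (p + q + 1) := by
    simp only [Fintype.sum_prod_type, closedSum_eq]
    refine Finset.sum_congr rfl fun u _ => ?_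
    rw [Finset.sum_comm]
    refine Finset.sum_congr rfl fun z _ => ?_
    calc ∑ y, (A u y * (M ^ (p + q + 1)) z u / √(G.degree u)) ^ 2
        = ∑ y, A u y * ((M ^ (p + q + 1)) z u ^ 2 / G.degree u) := by
          refine Finset.sum_congr rfl fun y _ => ?_
          rw [div_pow, Real.sq_sqrt (hd u).le, mul_pow, hA2, mul_div_assoc]
      _ = (M ^ (p + q + 1)) z u ^ 2 := by
          rw [← Finset.sum_mul, sum_adj]
          have := hd u
          field_simp
      _ = _ := by rw [hM, normAdj_pow_symm]
  rw [hright]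
  exact mul_le_mul_of_nonneg_right hleft (closedSum_nonneg G _)

/-- Without rainbow cycles of length `2 * j`, each closed walk of this length contains a conflict,
and the union bound over the pairs of positions bounds `closedSum G j`. -/
lemma closedSum_step [DecidableEq X] (f : V → Finset X) {r : ℕ} (hr0 : 0 < r)
    (hr : ∀ v, (f v).card = r) (hd : DiverseColoring G f) {δ : ℝ} (hδ : 0 < δ)
    (hdeg : ∀ x, δ ≤ G.degree x) {j : ℕ} (hj : 1 ≤ j)
    (hno : ¬ HasRainbowCycle G f (2 * (j + 1))) :
    closedSum G (j + 1) ≤ 16 * (j + 1 : ℝ) ^ 4 * r / δ * closedSum G j := by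
  classical
  set c : V → V → ℝ := fun u v => if Disjoint (f u) (f v) then 0 else 1 with hc
  have hc0 : ∀ u v, 0 ≤ c u v := by intro u v; simp only [hc]; split_ifs <;> simp
  have hc1 : ∀ u v, c u v ≤ 1 := by intro u v; simp only [hc]; split_ifs <;> simp
  have hcs : ∀ u v, c u v = c v u := by intro u v; simp only [hc, disjoint_comm]
  have hcr : ∀ y v, ∑ u, (if G.Adj u y then (1 : ℝ) else 0) * c u v ≤ r := by
    intro y v
    have h : ∀ u, (if G.Adj u y then (1 : ℝ) else 0) * c u v
        = if G.Adj u y ∧ ¬ Disjoint (f u) (f v) then 1 else 0 := by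
      intro u; simp only [hc]; split_ifs <;> simp_all
    simp only [h, Finset.sum_boole]
    exact_mod_cast card_conflict_le G f hr hd y v
  set T := closedSum G (j + 1) with hT
  set S := (r : ℝ) / δ * closedSum G j * T with hS
  have hT0 : 0 ≤ T := closedSum_nonneg G _
  have hS0 : 0 ≤ S := mul_nonneg (mul_nonneg (by positivity) (closedSum_nonneg G _)) hT0
  have harc : ∀ a b, 1 ≤ a → a ≤ b → a + b = 2 * (j + 1) →
      conflictSum (normAdj G) c a b ≤ √S := by
    intro a b ha hab hs
    obtain ⟨p, rfl⟩ : ∃ p, a = p + 1 := ⟨a - 1, by omega⟩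
    obtain ⟨q, hq⟩ : ∃ q, j = p + q := ⟨j - p, by omega⟩
    obtain rfl : b = q + (p + q + 1) := by omega
    subst hq
    exact Real.le_sqrt_of_sq_le (conflictSum_sq_le G hδ hdeg c hc0 hc1 r hcr p q)
  have hpair : ∀ a b, 1 ≤ a → 1 ≤ b → a + b = 2 * (j + 1) →
      conflictSum (normAdj G) c a b ≤ √S := by
    intro a b ha hb hs
    rcases le_total a b with h | h
    · exact harc a b ha h hs
    · rw [conflictSum_comm _ c hcs]; exact harc b a hb h (by omega)
  have hmain : T ≤ (2 * (j + 1) : ℝ) ^ 2 * √S := by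
    set m := 2 * (j + 1) with hm
    calc T = ∑ x, walkSum (normAdj G) m x (fun w => if w m = x then 1 else 0) :=
          trace_eq_walkSum _ _
      _ ≤ ∑ x, walkSum (normAdj G) m x (fun w => ∑ i' ∈ range m, ∑ i ∈ range i',
            if w m = x then c (w i) (w i') else 0) := by
          refine Finset.sum_le_sum fun x _ => ?_
          refine walkSum_mono _ G.Adj (normAdj_nonneg G) ?_ _ _ _ _ ?_
          · intro u v huv
            by_contra h
            exact huv (by simp [normAdj_apply, h])
          · intro w hw0 hadj
            by_cases hwm : w m = x
            · simp only [hwm, if_true]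
              by_contra hlt
              refine hno (hasRainbowCycle_of_seq G f (fun v => ?_) (by omega) w
                (hwm.trans hw0.symm) hadj fun i' hi' i hi => ?_)
              · rw [← Finset.card_pos, hr]; exact hr0
              · by_contra hdis
                refine hlt ?_
                have h1 : c (w i) (w i') = 1 := by simp only [hc, hdis, if_false]
                rw [← h1]
                refine (Finset.single_le_sum (f := fun i => c (w i) (w i'))
                  (fun _ _ => hc0 _ _) (mem_range.2 hi)).trans ?_
                exact Finset.single_le_sum (f := fun i' => ∑ i ∈ range i', c (w i) (w i'))
                  (fun _ _ => Finset.sum_nonneg fun _ _ => hc0 _ _) (mem_range.2 hi')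
            · simp [hwm]
      _ = ∑ i' ∈ range m, ∑ i ∈ range i', ∑ x, walkSum (normAdj G) m x
            (fun w => if w m = x then c (w i) (w i') else 0) := by
          simp only [walkSum_finset_sum]
          rw [Finset.sum_comm]
          exact Finset.sum_congr rfl fun i' _ => Finset.sum_comm
      _ ≤ ∑ i' ∈ range m, ∑ i ∈ range i', √S := by
          refine Finset.sum_le_sum fun i' hi' => Finset.sum_le_sum fun i hi => ?_
          rw [mem_range] at hi hi'
          obtain ⟨a, rfl⟩ : ∃ a, i' = i + a := ⟨i' - i, by omega⟩
          obtain ⟨b, hb⟩ : ∃ b, m = i + (a + b) := ⟨m - (i + a), by omega⟩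
          rw [hb, sum_walkSum_conflict]
          exact hpair _ _ (by omega) (by omega) (by omega)
      _ ≤ ∑ i' ∈ range m, m * √S := by
          refine Finset.sum_le_sum fun i' hi' => ?_
          rw [mem_range] at hi'
          rw [Finset.sum_const, card_range, nsmul_eq_mul]
          gcongr
      _ = (2 * (j + 1) : ℝ) ^ 2 * √S := by
          rw [Finset.sum_const, card_range, nsmul_eq_mul, hm]; push_cast; ring
  rcases hT0.eq_or_lt with h0 | hpos
  · rw [← h0]
    exact mul_nonneg (by positivity) (closedSum_nonneg G _)
  · have h2 : T ^ 2 ≤ ((2 * (j + 1) : ℝ) ^ 2 * √S) ^ 2 := by gcongr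
    rw [mul_pow, Real.sq_sqrt hS0, hS] at h2
    refine le_of_mul_le_mul_right ?_ hpos
    calc T * T = T ^ 2 := (sq T).symm
      _ ≤ _ := h2
      _ = _ := by ring

/-- Iterating from length `2` to length `2 * k` bounds the minimum degree. -/
lemma minDegree_bound [Nonempty V] [DecidableEq X] (f : V → Finset X) {r k : ℕ} (hr0 : 0 < r)
    (hk : 0 < k) (hr : ∀ v, (f v).card = r) (hd : DiverseColoring G f)
    (hno : ∀ ℓ ≤ 2 * k, ¬ HasRainbowCycle G f ℓ) {δ : ℝ} (hδ : 0 < δ)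
    (hdeg : ∀ x, δ ≤ G.degree x) :
    δ ^ k ≤ Fintype.card V * (16 * (k : ℝ) ^ 4 * r) ^ k := by
  set K : ℝ := 16 * (k : ℝ) ^ 4 * r with hK
  have hk1 : (1 : ℝ) ≤ k := by exact_mod_cast hk
  have hr1 : (1 : ℝ) ≤ r := by exact_mod_cast hr0
  have hk4 : (1 : ℝ) ≤ (k : ℝ) ^ 4 := one_le_pow₀ hk1
  have hK1 : 1 ≤ K := by rw [hK]; nlinarith
  have hind : ∀ j, j + 1 ≤ k → closedSum G (j + 1) ≤ Fintype.card V * (K / δ) ^ (j + 1) := by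
    intro j
    induction j with
    | zero =>
      intro _
      refine (closedSum_one_le G hδ hdeg).trans ?_
      rw [zero_add, pow_one, ← mul_div_assoc]
      gcongr
      exact le_mul_of_one_le_right (by positivity) hK1
    | succ j ih =>
      intro hj
      have h1 := closedSum_step G f hr0 hr hd hδ hdeg (j := j + 1) (by omega)
        (hno _ (by omega))
      have h2 : 16 * (((j + 1 : ℕ) : ℝ) + 1) ^ 4 * r / δ ≤ K / δ := by
        rw [hK]
        have : ((j + 1 : ℕ) : ℝ) + 1 ≤ k := by exact_mod_cast hj
        gcongr
      calc closedSum G (j + 1 + 1) ≤ _ := h1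
        _ ≤ K / δ * (Fintype.card V * (K / δ) ^ (j + 1)) :=
            mul_le_mul h2 (ih (by omega)) (closedSum_nonneg G _) (by positivity)
        _ = _ := by ring
  have hlow : 1 ≤ closedSum G k := by
    refine one_le_closedSum G (fun x => ?_) k
    exact_mod_cast hδ.trans_le (hdeg x)
  obtain ⟨j, rfl⟩ : ∃ j, k = j + 1 := ⟨k - 1, by omega⟩
  have h := hlow.trans (hind j le_rfl)
  rw [div_pow, ← mul_div_assoc, le_div_iff₀ (pow_pos hδ _), one_mul] at h
  exact h

end Graph

/-! ### Reduction to large minimum degree -/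

lemma hasRainbowCycle_of_induce {V X : Type} [DecidableEq X] {G : SimpleGraph V}
    {f : V → Finset X} {s : Set V} {ℓ : ℕ}
    (h : HasRainbowCycle (G.induce s) (fun v => f v) ℓ) : HasRainbowCycle G f ℓ := by
  obtain ⟨v, c, hc, hl, hdis⟩ := h
  refine ⟨_, c.map (SimpleGraph.Embedding.induce s).toHom, ?_, (SimpleGraph.Walk.length_map _ _).trans hl, ?_⟩
  · exact (SimpleGraph.Walk.isCycle_map_iff_of_injective
      (SimpleGraph.Embedding.induce (G := G) s).injective).2 hc
  · intro a ha b hb hab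
    rw [SimpleGraph.Walk.support_map, List.mem_map] at ha hb
    obtain ⟨a, ha, rfl⟩ := ha
    obtain ⟨b, hb, rfl⟩ := hb
    exact hdis a ha b hb (fun h => hab (by rw [h]))

/-- Deleting a vertex of degree at most `16 * k ^ 4 * r * n ^ (1 / k)` costs no more edges than the bound
allows; if there is no such vertex, `minDegree_bound` applies. -/
lemma card_edges_le {r k : ℕ} (hr0 : 0 < r) (hk : 0 < k) (X : Type) [DecidableEq X] (n : ℕ) :
    ∀ (V : Type) [Fintype V] (G : SimpleGraph V) (f : V → Finset X),
      Fintype.card V = n → (∀ v, (f v).card = r) → DiverseColoring G f →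
      (∀ ℓ ≤ 2 * k, ¬ HasRainbowCycle G f ℓ) →
      (Nat.card G.edgeSet : ℝ) ≤ 16 * (k : ℝ) ^ 4 * r * (n * (n : ℝ) ^ (1 / (k : ℝ))) := by
  induction n with
  | zero =>
    intro V _ G f hV _ _ _
    have : IsEmpty V := Fintype.card_eq_zero_iff.1 hV
    simp [Subsingleton.elim G ⊥]
  | succ n ih =>
    intro V _ G f hV hr hd hno
    classical
    set K : ℝ := 16 * (k : ℝ) ^ 4 * r with hK
    have hKpos : 0 < K := by rw [hK]; positivity
    have hne : Nonempty V := Fintype.card_pos_iff.1 (by omega)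
    set N : ℝ := ((n + 1 : ℕ) : ℝ) ^ (1 / (k : ℝ)) with hN
    have hNpos : 0 < N := by rw [hN]; positivity
    have hNk : N ^ k = ((n + 1 : ℕ) : ℝ) := by
      rw [hN, one_div]; exact Real.rpow_inv_natCast_pow (by positivity) (by omega)
    obtain ⟨v, hv⟩ : ∃ v, (G.degree v : ℝ) ≤ K * N := by
      by_contra! hall
      -- the minimum degree exceeds `K * N`, strictly
      obtain ⟨x₀, hx₀⟩ := G.exists_minimal_degree_vertex
      have hb := minDegree_bound G f hr0 hk hr hd hno (δ := G.minDegree)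
        (by rw [hx₀]; exact (mul_pos hKpos hNpos).trans (hall x₀))
        (fun x => by exact_mod_cast G.minDegree_le_degree x)
      rw [hV, ← hNk, ← mul_pow, mul_comm] at hb
      have hlt : (K * N) ^ k < (G.minDegree : ℝ) ^ k := by
        rw [hx₀]
        exact pow_lt_pow_left₀ (hall x₀) (by positivity) (by omega)
      exact absurd hlt (not_lt.2 hb)
    have hcard : Fintype.card ({v}ᶜ : Set V) = n := by
      rw [Fintype.card_compl_set, hV]; simp
    have hrec := ih ({v}ᶜ : Set V) (G.induce {v}ᶜ) (fun u => f u) hcard (fun u => hr u)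
      (fun a b hab h => hd a b (fun h' => hab (Subtype.ext h'))
        (h.imp (fun h => h) (fun ⟨u, hu⟩ => ⟨u, hu⟩)))
      (fun ℓ hℓ h => hno ℓ hℓ (hasRainbowCycle_of_induce h))
    have hedge : Nat.card G.edgeSet ≤ Nat.card (G.induce {v}ᶜ).edgeSet + G.degree v := by
      have h1 := G.card_edgeFinset_induce_compl_singleton v
      have h2 := G.card_edgeFinset_deleteIncidenceSet v
      rw [Nat.card_eq_fintype_card, Nat.card_eq_fintype_card, ← SimpleGraph.edgeFinset_card,
        ← SimpleGraph.edgeFinset_card]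
      omega
    have hmono : (n : ℝ) ^ (1 / (k : ℝ)) ≤ N := by
      rw [hN]
      exact Real.rpow_le_rpow (by positivity) (by push_cast; linarith) (by positivity)
    calc (Nat.card G.edgeSet : ℝ) ≤ Nat.card (G.induce {v}ᶜ).edgeSet + G.degree v := by
          exact_mod_cast hedge
      _ ≤ K * (n * (n : ℝ) ^ (1 / (k : ℝ))) + K * N := add_le_add hrec hv
      _ ≤ K * (n * N) + K * N := by gcongr
      _ = _ := by push_cast; ring

end RainbowCycles

/-- for all positive integers `r`, `k` there is a constant `c = c(r,k) > 0`
such that any graph on `n` vertices with a diverse `r`-set coloring and no rainbow cycle of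
length at most `2k` has at most `c·n^{1+1/k}` edges. -/
theorem statement7 (r k : ℕ) (hr : 0 < r) (hk : 0 < k) :
    ∃ c : ℝ, 0 < c ∧ ∀ (n : ℕ) (V X : Type) [Fintype V] [DecidableEq X],
      ∀ (G : SimpleGraph V) (f : V → Finset X),
      Fintype.card V = n → (∀ v, (f v).card = r) → DiverseColoring G f →
      (∀ ℓ ≤ 2 * k, ¬ HasRainbowCycle G f ℓ) →
      (Nat.card G.edgeSet : ℝ) ≤ c * (n : ℝ) ^ (1 + 1 / (k : ℝ)) := by
  refine ⟨16 * (k : ℝ) ^ 4 * r, by positivity, ?_⟩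
  intro n V X _ _ G f hV hf hd hno
  rw [Real.rpow_add' (by positivity) (by positivity), Real.rpow_one]
  exact RainbowCycles.card_edges_le hr hk X n V G f hV hf hd hno
end

section
/- Let G be a graph equipped with a diverse r-set coloring f, and let ℓ ≥ 2 be an integer. Then the number of homomorphisms (x_1, …, x_{2ℓ}) from the cycle C_{2ℓ} to G which are not rainbow (i.e., for which f(x_i) ∩ f(x_j) ≠ ∅ for some 1 ≤ i < j ≤ 2ℓ) is at most 16ℓ·(r·ℓ·Δ(G)·hom(C_{2ℓ−2}, G)·hom(C_{2ℓ}, G))^{1/2}. -/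
/-- `cycHom G m` is the number of homomorphisms of the cycle `C_m` into `G`, i.e. the
number of closed walks `(x_0, …, x_{m-1})` with `x_i` adjacent to `x_{i+1}` (indices mod
`m`).  For `m = 2` this is the degenerate cycle convention: `cycHom G 2 = 2|E(G)|`. -/
noncomputable def cycHom {V : Type*} (G : SimpleGraph V) (m : ℕ) : ℕ :=
  Nat.card {x : ZMod m → V // ∀ i, G.Adj (x i) (x (i + 1))}

/-! ### Walks with prescribed ends -/

open Classical in
/-- The walks of length `n` in `G` from `a` to `b`, as sequences of `n + 1` vertices. -/
noncomputable def walksFT {V : Type*} [Fintype V] (G : SimpleGraph V) (n : ℕ) (a b : V) :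
    Finset (Fin (n + 1) → V) :=
  Finset.univ.filter fun w =>
    (∀ k : Fin n, G.Adj (w k.castSucc) (w k.succ)) ∧ w 0 = a ∧ w (Fin.last n) = b

open Classical in
/-- The walks of length `n` from `u` to `b` some vertex of which has a color meeting that
of `a`. -/
noncomputable def meetingWalks {V X : Type*} [Fintype V] [DecidableEq X] (G : SimpleGraph V)
    (f : V → Finset X) (n : ℕ) (a u b : V) : Finset (Fin (n + 1) → V) :=
  (walksFT G n u b).filter fun w => ∃ k, ¬ Disjoint (f a) (f (w k))

open Classical in
/-- The walks of length `n` from `a` to `b` some vertex of which, other than the one at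
position `0`, has a color meeting that of `a`. -/
noncomputable def returningWalks {V X : Type*} [Fintype V] [DecidableEq X] (G : SimpleGraph V)
    (f : V → Finset X) (n : ℕ) (a b : V) : Finset (Fin (n + 1) → V) :=
  (walksFT G n a b).filter fun w => ∃ k : Fin n, ¬ Disjoint (f a) (f (w k.succ))

/-- The two walks become the two halves of the cycle, the second one traversed backwards. -/
lemma sum_sq_le_cycHom {V : Type*} [Fintype V] (G : SimpleGraph V) (n : ℕ) (hn : 0 < n) :
    ∑ p : V × V, (walksFT G n p.1 p.2).card ^ 2 ≤ cycHom G (2 * n) := by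
  classical
  have : NeZero (2 * n) := ⟨by omega⟩
  have : Fact (1 < 2 * n) := ⟨by omega⟩
  have h1 : ∑ p : V × V, (walksFT G n p.1 p.2).card ^ 2
      = (Finset.univ.sigma fun p : V × V =>
          walksFT G n p.1 p.2 ×ˢ walksFT G n p.1 p.2).card := by
    simp [Finset.card_sigma, sq]
  rw [h1, cycHom, Nat.card_eq_fintype_card, Fintype.card_subtype]
  refine Finset.card_le_card_of_injOn
    (fun s k => if h : k.val ≤ n then s.2.1 ⟨k.val, by omega⟩
      else s.2.2 ⟨2 * n - k.val, by omega⟩) ?_ ?_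
  · rintro ⟨⟨a, b⟩, w, w'⟩ h
    simp only [walksFT, Finset.coe_sigma, Set.mem_sigma_iff, Finset.mem_coe, Finset.mem_product,
      Finset.mem_filter, Finset.mem_univ, true_and] at h
    obtain ⟨⟨hw, hwa, hwb⟩, hw', hwa', hwb'⟩ := h
    simp only [Finset.coe_filter, Finset.mem_univ, true_and, Set.mem_ofPred_eq]
    intro i
    have hi : i.val < 2 * n := ZMod.val_lt i
    by_cases hlast : i.val + 1 = 2 * n
    · have hv : (i + 1).val = 0 := by
        rw [ZMod.val_add, ZMod.val_one, hlast, Nat.mod_self]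
      have hz : i + 1 = 0 := by rwa [ZMod.val_eq_zero] at hv
      rw [dif_pos (show (i + 1).val ≤ n by omega)]
      have e0 : (⟨(i + 1).val, by omega⟩ : Fin (n + 1)) = 0 := Fin.ext (by simp [hv])
      rw [e0, hwa, ← hwa']
      have key := (hw' ⟨0, hn⟩).symm
      have e2 : (Fin.castSucc ⟨0, hn⟩ : Fin (n + 1)) = 0 := rfl
      rw [e2] at key
      -- the first case is `n = 1`, where position `2n - 1` is the midpoint
      by_cases hle : i.val ≤ n
      · rw [dif_pos hle]
        have e3 : (⟨i.val, by omega⟩ : Fin (n + 1)) = Fin.last n :=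
          Fin.ext (by simp; omega)
        have e4 : (Fin.succ ⟨0, hn⟩ : Fin (n + 1)) = Fin.last n :=
          Fin.ext (by simp; omega)
        rw [e3, hwb, ← hwb', ← e4]; exact key
      · rw [dif_neg hle]
        have e3 : (⟨2 * n - i.val, by omega⟩ : Fin (n + 1)) = Fin.succ ⟨0, hn⟩ :=
          Fin.ext (by simp; omega)
        rw [e3]; exact key
    · have hv : (i + 1).val = i.val + 1 := by
        rw [ZMod.val_add, ZMod.val_one, Nat.mod_eq_of_lt (by omega)]
      by_cases hle : i.val + 1 ≤ n
      · rw [dif_pos (show i.val ≤ n by omega), dif_pos (show (i + 1).val ≤ n by omega)]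
        have e1 : (⟨(i + 1).val, by omega⟩ : Fin (n + 1)) = Fin.succ ⟨i.val, by omega⟩ :=
          Fin.ext (by simp [hv])
        rw [e1]
        exact hw ⟨i.val, by omega⟩
      · rw [dif_neg (show ¬ (i + 1).val ≤ n by omega)]
        have key := (hw' ⟨2 * n - (i.val + 1), by omega⟩).symm
        have e1 : (⟨2 * n - (i + 1).val, by omega⟩ : Fin (n + 1))
            = Fin.castSucc ⟨2 * n - (i.val + 1), by omega⟩ := Fin.ext (by simp [hv])
        rw [e1]
        by_cases hle' : i.val ≤ n
        · rw [dif_pos hle']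
          have e3 : (⟨i.val, by omega⟩ : Fin (n + 1)) = Fin.last n :=
            Fin.ext (by simp; omega)
          have e4 : (Fin.succ ⟨2 * n - (i.val + 1), by omega⟩ : Fin (n + 1)) = Fin.last n :=
            Fin.ext (by simp; omega)
          rw [e3, hwb, ← hwb', ← e4]; exact key
        · rw [dif_neg hle']
          have e3 : (⟨2 * n - i.val, by omega⟩ : Fin (n + 1))
              = Fin.succ ⟨2 * n - (i.val + 1), by omega⟩ := Fin.ext (by simp; omega)
          rw [e3]; exact key
  · rintro ⟨⟨a, b⟩, w, w'⟩ h ⟨⟨c, d⟩, z, z'⟩ h' heq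
    simp only [walksFT, Finset.coe_sigma, Set.mem_sigma_iff, Finset.mem_coe, Finset.mem_product,
      Finset.mem_filter, Finset.mem_univ, true_and] at h h'
    obtain ⟨⟨-, hwa, hwb⟩, -, hwa', hwb'⟩ := h
    obtain ⟨⟨-, hza, hzb⟩, -, hza', hzb'⟩ := h'
    have e : w = z := by
      funext k
      have hk := congrFun heq (k.val : ZMod (2 * n))
      have hv : ((k.val : ℕ) : ZMod (2 * n)).val = k.val :=
        ZMod.val_cast_of_lt (by omega)
      have hkn : k.val ≤ n := by omega
      simpa [hv, hkn] using hk
    have e' : w' = z' := by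
      funext k
      by_cases hk0 : k = 0
      · rw [hk0, hwa', hza', ← hwa, ← hza, e]
      by_cases hkl : k = Fin.last n
      · rw [hkl, hwb', hzb', ← hwb, ← hzb, e]
      have h0 : k.val ≠ 0 := fun h => hk0 (Fin.ext h)
      have hl : k.val ≠ n := fun h => hkl (Fin.ext h)
      have hk := congrFun heq ((2 * n - k.val : ℕ) : ZMod (2 * n))
      have hv : ((2 * n - k.val : ℕ) : ZMod (2 * n)).val = 2 * n - k.val :=
        ZMod.val_cast_of_lt (by omega)
      have hkn : ¬ (2 * n - k.val ≤ n) := by omega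
      have hkk : 2 * n - (2 * n - k.val) = k.val := by omega
      simp only [hv] at hk
      rw [dif_neg hkn, dif_neg hkn] at hk
      simpa [hkk] using hk
    subst e e' hwa hwb
    rw [← hza, ← hzb]

/-! ### Counting returning walks -/

/-- Each color of `S` lies in the color of at most one neighbor of `u`. -/
lemma card_meeting_le {V X : Type*} [Fintype V] [DecidableEq X] (G : SimpleGraph V)
    [DecidableRel G.Adj] (f : V → Finset X) (hdiv : DiverseColoring G f) (u : V)
    (S : Finset X) :
    ((G.neighborFinset u).filter fun a => ¬ Disjoint (f a) S).card ≤ S.card := by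
  classical
  obtain rfl | ⟨c₀, -⟩ := S.eq_empty_or_nonempty
  · simp
  have : Nonempty X := ⟨c₀⟩
  have hex : ∀ a ∈ (G.neighborFinset u).filter fun a => ¬ Disjoint (f a) S,
      ∃ c ∈ S, c ∈ f a := by
    intro a ha
    obtain ⟨c, h1, h2⟩ := Finset.not_disjoint_iff.1 (Finset.mem_filter.1 ha).2
    exact ⟨c, h2, h1⟩
  choose! g hgS hg using hex
  refine Finset.card_le_card_of_injOn g hgS ?_
  intro a ha b hb hab
  by_contra hne
  have ha' := (Finset.mem_filter.1 ha).1
  have hb' := (Finset.mem_filter.1 hb).1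
  rw [SimpleGraph.mem_neighborFinset] at ha' hb'
  exact Finset.disjoint_left.1 (hdiv a b hne (Or.inr ⟨u, ha'.symm, hb'.symm⟩))
    (hg a ha) (hab ▸ hg b hb)

/-- Deleting the first vertex of a returning walk. -/
lemma card_returning_le {V X : Type*} [Fintype V] [DecidableEq X] (G : SimpleGraph V)
    [DecidableRel G.Adj] (f : V → Finset X) (n : ℕ) (a b : V) :
    (returningWalks G f (n + 1) a b).card
      ≤ ∑ u ∈ G.neighborFinset a, (meetingWalks G f n a u b).card := by
  classical
  rw [← Finset.card_sigma]
  refine Finset.card_le_card_of_injOn (fun w => ⟨w 1, Fin.tail w⟩) ?_ ?_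
  · intro w hw
    simp only [returningWalks, walksFT, Finset.coe_filter, Finset.mem_filter, Finset.mem_univ,
      true_and, Set.mem_ofPred_eq] at hw
    obtain ⟨⟨hw, hwa, hwb⟩, k, hk⟩ := hw
    simp only [meetingWalks, walksFT, Finset.coe_sigma, Set.mem_sigma_iff, Finset.mem_coe,
      Finset.mem_filter, Finset.mem_univ, true_and, SimpleGraph.mem_neighborFinset]
    refine ⟨?_, ⟨fun k => hw k.succ, rfl, hwb⟩, k, hk⟩
    have := hw 0
    rw [Fin.castSucc_zero, hwa] at this
    exact this
  · intro w hw z hz h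
    simp only [returningWalks, walksFT, Finset.coe_filter, Finset.mem_filter, Finset.mem_univ,
      true_and, Set.mem_ofPred_eq] at hw hz
    simp only [Sigma.mk.injEq, heq_eq_eq] at h
    rw [← Fin.cons_self_tail w, ← Fin.cons_self_tail z, h.2, hw.1.2.1, hz.1.2.1]

lemma sum_sq_meeting_le {V X : Type*} [Fintype V] [DecidableEq X] (G : SimpleGraph V)
    [DecidableRel G.Adj] (r : ℕ) (f : V → Finset X) (hf : ∀ v, (f v).card = r)
    (hdiv : DiverseColoring G f) (n : ℕ) (u b : V) :
    ∑ a ∈ G.neighborFinset u, (meetingWalks G f n a u b).card ^ 2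
      ≤ r * (n + 1) * (walksFT G n u b).card ^ 2 := by
  classical
  have h1 : ∑ a ∈ G.neighborFinset u, (meetingWalks G f n a u b).card
      ≤ r * (n + 1) * (walksFT G n u b).card := by
    simp_rw [meetingWalks, Finset.card_filter]
    rw [Finset.sum_comm, mul_comm, ← smul_eq_mul]
    refine Finset.sum_le_card_nsmul _ _ _ fun w _ => ?_
    rw [← Finset.card_filter]
    calc _ ≤ ((G.neighborFinset u).filter fun a =>
              ¬ Disjoint (f a) (Finset.univ.biUnion fun k => f (w k))).card := by
          refine Finset.card_le_card fun a ha => ?_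
          simp only [Finset.mem_filter] at ha ⊢
          refine ⟨ha.1, ?_⟩
          rw [Finset.disjoint_biUnion_right]
          obtain ⟨k, hk⟩ := ha.2
          exact fun h => hk (h k (Finset.mem_univ k))
      _ ≤ _ := card_meeting_le G f hdiv u _
      _ ≤ (Finset.univ : Finset (Fin (n + 1))).card * r :=
          Finset.card_biUnion_le_card_mul _ _ _ fun k _ => (hf _).le
      _ = r * (n + 1) := by simp [mul_comm]
  calc _ ≤ ∑ a ∈ G.neighborFinset u,
          (meetingWalks G f n a u b).card * (walksFT G n u b).card := by
        refine Finset.sum_le_sum fun a _ => ?_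
        rw [sq]
        exact Nat.mul_le_mul_left _ (Finset.card_filter_le _ _)
    _ = (∑ a ∈ G.neighborFinset u, (meetingWalks G f n a u b).card)
          * (walksFT G n u b).card := by rw [Finset.sum_mul]
    _ ≤ r * (n + 1) * (walksFT G n u b).card * (walksFT G n u b).card :=
        Nat.mul_le_mul_right _ h1
    _ = _ := by ring

lemma sum_sq_returning_le {V X : Type*} [Fintype V] [DecidableEq X] (G : SimpleGraph V)
    [DecidableRel G.Adj] (r : ℕ) (f : V → Finset X) (hf : ∀ v, (f v).card = r)
    (hdiv : DiverseColoring G f) (n : ℕ) (hn : 0 < n) :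
    ∑ p : V × V, (returningWalks G f (n + 1) p.1 p.2).card ^ 2
      ≤ G.maxDegree * (r * (n + 1) * cycHom G (2 * n)) := by
  classical
  calc _ ≤ ∑ p : V × V, G.maxDegree *
          ∑ u ∈ G.neighborFinset p.1, (meetingWalks G f n p.1 u p.2).card ^ 2 := by
        refine Finset.sum_le_sum fun p _ => ?_
        calc _ ≤ (∑ u ∈ G.neighborFinset p.1, (meetingWalks G f n p.1 u p.2).card) ^ 2 :=
              Nat.pow_le_pow_left (card_returning_le G f n p.1 p.2) 2
          _ ≤ _ := sq_sum_le_card_mul_sum_sq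
          _ ≤ _ := Nat.mul_le_mul_right _ (G.degree_le_maxDegree p.1)
    _ = G.maxDegree * ∑ p : V × V,
          ∑ a ∈ G.neighborFinset p.1, (meetingWalks G f n a p.1 p.2).card ^ 2 := by
        rw [← Finset.mul_sum]
        congr 1
        -- exchange the roles of the ends of the edge `a u`
        rw [Fintype.sum_prod_type_right, Fintype.sum_prod_type_right]
        refine Finset.sum_congr rfl fun b _ => ?_
        exact Finset.sum_comm' (by simp [G.adj_comm])
    _ ≤ G.maxDegree * ∑ p : V × V, r * (n + 1) * (walksFT G n p.1 p.2).card ^ 2 :=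
        Nat.mul_le_mul_left _ (Finset.sum_le_sum fun p _ =>
          sum_sq_meeting_le G r f hf hdiv n p.1 p.2)
    _ ≤ _ := by
        rw [← Finset.mul_sum]
        exact Nat.mul_le_mul_left _ (Nat.mul_le_mul_left _ (sum_sq_le_cycHom G n hn))

/-! ### Cutting non-rainbow cycles -/

/-- The factor `2 * ℓ` is the number of positions at which the cycle can be cut. -/
lemma card_nonrainbow_le {V X : Type*} [Fintype V] [DecidableEq X] (G : SimpleGraph V)
    (f : V → Finset X) (ℓ : ℕ) (hℓ : 2 ≤ ℓ) :
    Nat.card {x : ZMod (2 * ℓ) → V // (∀ i, G.Adj (x i) (x (i + 1))) ∧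
        ∃ i j : ZMod (2 * ℓ), i ≠ j ∧ ¬ Disjoint (f (x i)) (f (x j))}
      ≤ 2 * ℓ * ∑ p : V × V,
          (walksFT G ℓ p.1 p.2).card * (returningWalks G f ℓ p.1 p.2).card := by
  classical
  have : NeZero (2 * ℓ) := ⟨by omega⟩
  have h1 : 2 * ℓ * ∑ p : V × V,
          (walksFT G ℓ p.1 p.2).card * (returningWalks G f ℓ p.1 p.2).card
      = ((Finset.univ : Finset (ZMod (2 * ℓ))) ×ˢ (Finset.univ.sigma fun p : V × V =>
          walksFT G ℓ p.1 p.2 ×ˢ returningWalks G f ℓ p.1 p.2)).card := by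
    simp [Finset.card_sigma, Finset.card_product, ZMod.card]
  rw [h1, Nat.card_eq_fintype_card, Fintype.card_subtype]
  have hex : ∀ x ∈ Finset.univ.filter (fun x : ZMod (2 * ℓ) → V =>
      (∀ i, G.Adj (x i) (x (i + 1))) ∧
        ∃ i j : ZMod (2 * ℓ), i ≠ j ∧ ¬ Disjoint (f (x i)) (f (x j))),
      ∃ i : ZMod (2 * ℓ), ∃ k : Fin ℓ, ¬ Disjoint (f (x i)) (f (x (i + (k.val + 1 : ℕ)))) := by
    intro x hx
    obtain ⟨-, i, j, hij, hd⟩ := (Finset.mem_filter.1 hx).2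
    have hne : (j - i).val ≠ 0 := by
      rw [Ne, ZMod.val_eq_zero, sub_eq_zero]; exact fun h => hij h.symm
    have hlt : (j - i).val < 2 * ℓ := ZMod.val_lt _
    have hcast : (((j - i).val : ℕ) : ZMod (2 * ℓ)) = j - i := ZMod.natCast_zmod_val _
    by_cases hle : (j - i).val ≤ ℓ
    · refine ⟨i, ⟨(j - i).val - 1, by omega⟩, ?_⟩
      have e : (j - i).val - 1 + 1 = (j - i).val := by omega
      simp only [e, hcast, add_sub_cancel]
      exact hd
    · refine ⟨j, ⟨2 * ℓ - (j - i).val - 1, by omega⟩, ?_⟩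
      have e : 2 * ℓ - (j - i).val - 1 + 1 = 2 * ℓ - (j - i).val := by omega
      simp only [e]
      rw [Nat.cast_sub hlt.le, hcast, ZMod.natCast_self]
      have e2 : j + (0 - (j - i)) = i := by ring
      rw [e2, disjoint_comm]
      exact hd
  choose! g hg using hex
  refine Finset.card_le_card_of_injOn
    (fun x => (g x, ⟨(x (g x), x (g x + (ℓ : ℕ))),
      (fun k => x (g x - (k.val : ℕ)), fun k => x (g x + (k.val : ℕ)))⟩)) ?_ ?_
  · intro x hx
    obtain ⟨k, hk⟩ := hg x hx
    have hadj := (Finset.mem_filter.1 hx).2.1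
    simp only [Finset.coe_product, Finset.coe_univ, Set.mem_prod, Set.mem_univ, true_and,
      Finset.mem_coe, Finset.mem_sigma, Finset.mem_univ, Finset.mem_product, walksFT,
      returningWalks, Finset.mem_filter]
    refine ⟨⟨fun k => ?_, ?_, ?_⟩, ⟨fun k => ?_, ?_, ?_⟩, k, ?_⟩
    · have := (hadj (g x - ((k.val + 1 : ℕ) : ZMod (2 * ℓ)))).symm
      have e : g x - ((k.val + 1 : ℕ) : ZMod (2 * ℓ)) + 1 = g x - (k.val : ℕ) := by
        push_cast; ring
      rw [e] at this
      simpa using this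
    · simp
    -- the antipode of `g x` is reached in either direction
    · have e : ((ℓ : ℕ) : ZMod (2 * ℓ)) + (ℓ : ℕ) = 0 := by
        rw [← Nat.cast_add, ← two_mul, ZMod.natCast_self]
      rw [Fin.val_last, sub_eq_add_neg, neg_eq_of_add_eq_zero_left e]
    · have := hadj (g x + ((k.val : ℕ) : ZMod (2 * ℓ)))
      rw [add_assoc] at this
      simpa using this
    · simp
    · simp
    · simpa using hk
  · intro x hx y hy h
    simp only [Prod.mk.injEq, Sigma.mk.injEq, heq_eq_eq] at h
    obtain ⟨hgg, -, h2, h3⟩ := h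
    funext z
    have hlt : (z - g x).val < 2 * ℓ := ZMod.val_lt _
    have hcast : (((z - g x).val : ℕ) : ZMod (2 * ℓ)) = z - g x := ZMod.natCast_zmod_val _
    by_cases hle : (z - g x).val ≤ ℓ
    · have := congrFun h3 ⟨(z - g x).val, by omega⟩
      simp only [← hgg, hcast, add_sub_cancel] at this
      exact this
    · have := congrFun h2 ⟨2 * ℓ - (z - g x).val, by omega⟩
      simp only [← hgg] at this
      rw [Nat.cast_sub hlt.le, hcast, ZMod.natCast_self] at this
      have e2 : g x - (0 - (z - g x)) = z := by ring
      rwa [e2] at this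

/-! ### Combination by Cauchy–Schwarz -/

/-- for a graph `G` with a diverse `r`-set coloring `f` and `ℓ ≥ 2`, the number
of homomorphisms of `C_{2ℓ}` into `G` which are not rainbow is at most
`16ℓ·(r·ℓ·Δ(G)·hom(C_{2ℓ-2},G)·hom(C_{2ℓ},G))^{1/2}`. -/
theorem statement8 {V X : Type*} [Fintype V] [DecidableEq X] (G : SimpleGraph V)
    [DecidableRel G.Adj] (r : ℕ) (hr : 0 < r) (f : V → Finset X)
    (hf : ∀ v, (f v).card = r) (hdiv : DiverseColoring G f) (ℓ : ℕ) (hℓ : 2 ≤ ℓ) :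
    (Nat.card {x : ZMod (2 * ℓ) → V // (∀ i, G.Adj (x i) (x (i + 1))) ∧
        ∃ i j : ZMod (2 * ℓ), i ≠ j ∧ ¬ Disjoint (f (x i)) (f (x j))} : ℝ)
      ≤ 16 * ℓ * Real.sqrt
          (r * ℓ * G.maxDegree * cycHom G (2 * ℓ - 2) * cycHom G (2 * ℓ)) := by
  obtain ⟨n, rfl⟩ : ∃ n, ℓ = n + 1 := ⟨ℓ - 1, by omega⟩
  have h1 : (Nat.card {x : ZMod (2 * (n + 1)) → V // (∀ i, G.Adj (x i) (x (i + 1))) ∧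
        ∃ i j : ZMod (2 * (n + 1)), i ≠ j ∧ ¬ Disjoint (f (x i)) (f (x j))} : ℝ)
      ≤ 2 * (n + 1 : ℕ) * ∑ p : V × V, ((walksFT G (n + 1) p.1 p.2).card : ℝ) *
          ((returningWalks G f (n + 1) p.1 p.2).card : ℝ) := by
    exact_mod_cast card_nonrainbow_le G f (n + 1) hℓ
  have h2 : ∑ p : V × V, ((walksFT G (n + 1) p.1 p.2).card : ℝ) ^ 2
      ≤ cycHom G (2 * (n + 1)) := by
    exact_mod_cast sum_sq_le_cycHom G (n + 1) (by omega)
  have h3 : ∑ p : V × V, ((returningWalks G f (n + 1) p.1 p.2).card : ℝ) ^ 2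
      ≤ G.maxDegree * (r * ((n + 1 : ℕ) : ℝ) * cycHom G (2 * (n + 1) - 2)) := by
    have e : 2 * (n + 1) - 2 = 2 * n := by omega
    rw [e]
    exact_mod_cast sum_sq_returning_le G r f hf hdiv n (by omega)
  have h4 := Real.sum_mul_le_sqrt_mul_sqrt Finset.univ
    (fun p : V × V => ((walksFT G (n + 1) p.1 p.2).card : ℝ))
    (fun p : V × V => ((returningWalks G f (n + 1) p.1 p.2).card : ℝ))
  set S := Real.sqrt (r * (n + 1 : ℕ) * G.maxDegree * cycHom G (2 * (n + 1) - 2)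
    * cycHom G (2 * (n + 1))) with hS
  have h5 : ∑ p : V × V, ((walksFT G (n + 1) p.1 p.2).card : ℝ) *
          ((returningWalks G f (n + 1) p.1 p.2).card : ℝ) ≤ S := by
    refine h4.trans ((mul_le_mul (Real.sqrt_le_sqrt h2) (Real.sqrt_le_sqrt h3)
      (Real.sqrt_nonneg _) (Real.sqrt_nonneg _)).trans (le_of_eq ?_))
    rw [← Real.sqrt_mul (Nat.cast_nonneg _), hS]
    congr 1
    ring
  have hS0 : 0 ≤ S := Real.sqrt_nonneg _
  calc _ ≤ _ := h1
    _ ≤ 2 * (n + 1 : ℕ) * S := by gcongr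
    _ ≤ 16 * (n + 1 : ℕ) * S := by gcongr; norm_num
end

section
/- Let G be a graph equipped with a diverse r-set coloring, and let ℓ ≥ 2 be an integer. If G contains no rainbow cycle of length 2ℓ, then hom(C_{2ℓ}, G) ≤ 256·ℓ³·r·Δ(G)·hom(C_{2ℓ−2}, G). -/
namespace RainbowCycle

open Finset

variable {V : Type*}

theorem exists_walk (G : SimpleGraph V) (n : ℕ) (p : ℕ → V)
    (h : ∀ i < n, G.Adj (p i) (p (i + 1))) {a b : V} (ha : p 0 = a) (hb : p n = b) :
    ∃ w : G.Walk a b, w.length = n ∧ ∀ i ≤ n, w.getVert i = p i := by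
  subst ha hb
  induction n generalizing p with
  | zero => exact ⟨.nil, rfl, fun i hi => by simp [Nat.le_zero.mp hi]⟩
  | succ n ih =>
    obtain ⟨w, hw, hv⟩ := ih (fun i => p (i + 1)) fun i hi => h (i + 1) (by omega)
    refine ⟨.cons (h 0 (by omega)) w, by simp [hw], fun i hi => ?_⟩
    cases i with
    | zero => simp
    | succ i => simpa using hv i (by omega)

/-! ### Homomorphic cycles and walks -/

variable [Fintype V] (G : SimpleGraph V) [DecidableRel G.Adj]

/-- The homomorphisms `C_m → G`, as functions on `ZMod m`. -/
def homs (m : ℕ) [NeZero m] : Finset (ZMod m → V) :=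
  {x | ∀ i, G.Adj (x i) (x (i + 1))}

theorem cycHom_eq (m : ℕ) [NeZero m] :
    cycHom G m = #(homs G m) := by
  classical
  rw [cycHom, Nat.card_eq_fintype_card, Fintype.card_subtype, homs]

variable [DecidableEq V]

/-- Two walks of length `n` from `a` to `b` glue to a homomorphic `2n`-cycle, injectively. -/
theorem sum_sq_le (n : ℕ) (hn : 0 < n) [NeZero (2 * n)] :
    ∑ c : V × V, #(G.finsetWalkLength n c.1 c.2) ^ 2 ≤ #(homs G (2 * n)) := by
  classical
  rw [card_eq_sum_card_fiberwise (s := homs G (2 * n)) (t := univ)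
    (f := fun x => (x 0, x (n : ℕ))) (by simp [Set.MapsTo])]
  refine sum_le_sum fun ⟨a, b⟩ _ => ?_
  rw [sq, ← card_product]
  have hval : ((n : ℕ) : ZMod (2 * n)).val = n := ZMod.val_cast_of_lt (by omega)
  refine card_le_card_of_injOn (fun pq i => (pq.1.append pq.2.reverse).getVert i.val) ?_ ?_
  · rintro ⟨p, q⟩ hpq
    simp only [coe_product, Set.mem_prod, mem_coe, SimpleGraph.mem_finsetWalkLength_iff] at hpq
    obtain ⟨hp, hq⟩ := hpq
    have hlen : (p.append q.reverse).length = 2 * n := by simp [hp, hq]; omega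
    simp only [homs, coe_filter, mem_filter, mem_univ, true_and, Set.mem_ofPred_eq, Prod.mk.injEq,
      ZMod.val_zero, SimpleGraph.Walk.getVert_zero, hval]
    refine ⟨fun i => ?_, ?_⟩
    · have hi := ZMod.val_lt i
      have := (p.append q.reverse).adj_getVert_succ (i := i.val) (by omega)
      by_cases h : i.val + 1 < 2 * n
      · have e : i + 1 = ((i.val + 1 : ℕ) : ZMod (2 * n)) := by simp
        rwa [e, ZMod.val_cast_of_lt h]
      · -- the last step closes up: position `2n` and position `0` are both `a`
        have h0 : i + 1 = 0 := by
          have : i.val + 1 = 2 * n := by omega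
          rw [← ZMod.natCast_zmod_val i, ← Nat.cast_one, ← Nat.cast_add, this, ZMod.natCast_self]
        rw [h0, ZMod.val_zero, SimpleGraph.Walk.getVert_zero]
        rwa [SimpleGraph.Walk.getVert_of_length_le _ (i := i.val + 1) (by omega)] at this
    · simp [SimpleGraph.Walk.getVert_append, hp]
  · rintro ⟨p, q⟩ hpq ⟨p', q'⟩ hpq' h
    simp only [coe_product, Set.mem_prod, mem_coe, SimpleGraph.mem_finsetWalkLength_iff]
      at hpq hpq'
    have key : ∀ i < 2 * n,
        (p.append q.reverse).getVert i = (p'.append q'.reverse).getVert i := fun i hi => by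
      have := congrFun h (i : ZMod (2 * n))
      simpa [ZMod.val_cast_of_lt hi] using this
    simp only [SimpleGraph.Walk.getVert_append, hpq.1, hpq'.1, SimpleGraph.Walk.getVert_reverse,
      hpq.2, hpq'.2] at key
    rw [Prod.mk.injEq]
    constructor
    · refine SimpleGraph.Walk.ext_getVert_le_length (by omega) fun k hk => ?_
      rcases hk.lt_or_eq with hk | rfl
      · simpa [show k < n by omega] using key k (by omega)
      · rw [SimpleGraph.Walk.getVert_length, hpq.1, ← hpq'.1, SimpleGraph.Walk.getVert_length]
    · refine SimpleGraph.Walk.ext_getVert_le_length (by omega) fun k hk => ?_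
      rcases Nat.eq_zero_or_pos k with rfl | hk0
      · simp
      · simpa [show ¬ (2 * n - k < n) by omega, show n - (2 * n - k - n) = k by omega]
          using key (2 * n - k) (by omega)

/-! ### Cycles with related entries -/

variable (R : V → V → Prop) [DecidableRel R]

/-- The walks of length `n` from `z` to `y` through a vertex related to `x`. -/
def badWalks (n : ℕ) (x z y : V) : Finset (G.Walk z y) :=
  {p ∈ G.finsetWalkLength n z y | ∃ v ∈ p.support, R x v}

/-- The homomorphic `2(n+1)`-cycles in which `x 0` is related to one of `x 1, …, x (n+1)`. -/
def badHoms (n : ℕ) [NeZero (2 * (n + 1))] : Finset (ZMod (2 * (n + 1)) → V) :=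
  {x ∈ homs G (2 * (n + 1)) | ∃ d ∈ Icc 1 (n + 1), R (x 0) (x (d : ℕ))}

/-- Cutting a cycle at `x 0`, `x 1` and `x (n+1)`. -/
theorem card_badHoms_le (n : ℕ) [NeZero (2 * (n + 1))] :
    #(badHoms G R n) ≤ ∑ c : V × V × V,
      (if G.Adj c.1 c.2.1 then #(badWalks G R n c.1 c.2.1 c.2.2) else 0) *
      (if G.Adj c.1 c.2.1 then #(G.finsetWalkLength (n + 1) c.2.2 c.1) else 0) := by
  classical
  rw [card_eq_sum_card_fiberwise (s := badHoms G R n) (t := univ)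
    (f := fun x => (x 0, x 1, x ((n + 1 : ℕ) : ZMod (2 * (n + 1))))) (by simp [Set.MapsTo])]
  refine sum_le_sum fun ⟨a, z, b⟩ _ => ?_
  simp only
  by_cases haz : G.Adj a z
  swap
  · rw [if_neg haz, zero_mul, Nat.le_zero, card_eq_zero, filter_eq_empty_iff]
    rintro x hx h
    simp only [Prod.mk.injEq] at h
    simp only [badHoms, homs, mem_filter, mem_univ, true_and] at hx
    have := hx.1 0
    rw [zero_add, h.1, h.2.1] at this
    exact haz this
  rw [if_pos haz, if_pos haz, ← card_product]
  have hex : ∀ x ∈ {x ∈ badHoms G R n | (x 0, x 1, x ((n + 1 : ℕ) : ZMod (2 * (n + 1)))) = (a, z, b)},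
      ∃ pq : G.Walk z b × G.Walk b a, (pq.1.length = n ∧
        ∀ i ≤ n, pq.1.getVert i = x ((i + 1 : ℕ) : ZMod (2 * (n + 1)))) ∧
        (pq.2.length = n + 1 ∧
        ∀ i ≤ n + 1, pq.2.getVert i = x ((i + (n + 1) : ℕ) : ZMod (2 * (n + 1)))) := by
    intro x hx
    simp only [badHoms, homs, mem_filter, mem_univ, true_and, Prod.mk.injEq] at hx
    obtain ⟨⟨hx, -⟩, h0, h1, h2⟩ := hx
    have hx' : ∀ i : ℕ, G.Adj (x (i : ZMod (2 * (n + 1)))) (x ((i + 1 : ℕ) : ZMod _)) := by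
      intro i; simpa using hx i
    obtain ⟨p, hp⟩ := exists_walk G n (fun i => x ((i + 1 : ℕ) : ZMod (2 * (n + 1))))
      (fun i _ => hx' _) (a := z) (b := b) (by simpa using h1) h2
    obtain ⟨q, hq⟩ := exists_walk G (n + 1) (fun i => x ((i + (n + 1) : ℕ) : ZMod (2 * (n + 1))))
      (fun i _ => by simpa [Nat.add_right_comm] using hx' (i + (n + 1))) (a := b) (b := a)
      (by simpa using h2) (by rw [← two_mul, ZMod.natCast_self, h0])
    exact ⟨(p, q), hp, hq⟩
  rcases eq_empty_or_nonempty
    {x ∈ badHoms G R n | (x 0, x 1, x ((n + 1 : ℕ) : ZMod (2 * (n + 1)))) = (a, z, b)} with he | ⟨x₀, hx₀⟩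
  · rw [he]; exact Nat.zero_le _
  have : Nonempty (G.Walk z b × G.Walk b a) := ⟨(hex x₀ hx₀).choose⟩
  choose! F hF using hex
  refine card_le_card_of_injOn F ?_ ?_
  · intro x hx
    obtain ⟨⟨hp, hpv⟩, hq, -⟩ := hF x hx
    simp only [badHoms, coe_filter, mem_filter, Set.mem_ofPred_eq, Prod.mk.injEq] at hx
    obtain ⟨⟨-, d, hd, hR⟩, h0, -⟩ := hx
    rw [mem_Icc] at hd
    simp only [badWalks, coe_product, Set.mem_prod, mem_coe, mem_filter,
      SimpleGraph.mem_finsetWalkLength_iff]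
    refine ⟨⟨hp, _, (F x).1.getVert_mem_support (d - 1), ?_⟩, hq⟩
    rwa [hpv _ (by omega), ← h0, Nat.sub_add_cancel hd.1]
  · intro x hx x' hx' h
    obtain ⟨⟨-, hp⟩, -, hq⟩ := hF x hx
    obtain ⟨⟨-, hp'⟩, -, hq'⟩ := hF x' hx'
    rw [← h] at hp' hq'
    -- positions `1, …, n+1` are read off the first walk, positions `n+1, …, 2n+2` off the second
    have key : ∀ i : ℕ, 1 ≤ i → i ≤ 2 * (n + 1) →
        x (i : ZMod (2 * (n + 1))) = x' (i : ZMod (2 * (n + 1))) := by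
      intro i h1 h2
      by_cases hi : i ≤ n + 1
      · have e : i - 1 + 1 = i := by omega
        have := (hp (i - 1) (by omega)).symm.trans (hp' (i - 1) (by omega))
        rwa [e] at this
      · have e : i - (n + 1) + (n + 1) = i := by omega
        have := (hq (i - (n + 1)) (by omega)).symm.trans (hq' (i - (n + 1)) (by omega))
        rwa [e] at this
    funext i
    have hi := ZMod.val_lt i
    rcases Nat.eq_zero_or_pos i.val with h0 | h0
    · have := key (2 * (n + 1)) (by omega) le_rfl
      rw [ZMod.natCast_self] at this
      rwa [(ZMod.val_eq_zero i).mp h0]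
    · simpa using key i.val h0 hi.le

/-- If every `z` has at most `s` neighbors related to a given vertex, then `x` can be chosen in at
most `(n+1)s` ways for each walk starting at `z`. -/
theorem sum_badWalks_le (n s : ℕ) (hs : ∀ z v, #{x | G.Adj x z ∧ R x v} ≤ s) (z y : V) :
    ∑ x : V, (if G.Adj x z then #(badWalks G R n x z y) else 0)
      ≤ (n + 1) * s * #(G.finsetWalkLength n z y) := by
  have h1 : ∑ x : V, (if G.Adj x z then #(badWalks G R n x z y) else 0)
      = ∑ p ∈ G.finsetWalkLength n z y, #{x | G.Adj x z ∧ ∃ v ∈ p.support, R x v} := by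
    simp only [badWalks, card_filter]
    rw [sum_comm]
    refine sum_congr rfl fun x _ => ?_
    split_ifs with h <;> simp [h]
  rw [h1, mul_comm, ← smul_eq_mul]
  refine sum_le_card_nsmul _ _ _ fun p hp => ?_
  rw [SimpleGraph.mem_finsetWalkLength_iff] at hp
  calc #{x | G.Adj x z ∧ ∃ v ∈ p.support, R x v}
      ≤ #(p.support.toFinset.biUnion fun v => {x | G.Adj x z ∧ R x v}) := by
        refine card_le_card fun x hx => ?_
        simp only [mem_filter, mem_univ, true_and, mem_biUnion, List.mem_toFinset] at hx ⊢
        obtain ⟨h, v, hv, hR⟩ := hx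
        exact ⟨v, hv, h, hR⟩
    _ ≤ #p.support.toFinset * s := card_biUnion_le_card_mul _ _ _ fun v _ => hs z v
    _ ≤ (n + 1) * s := by
        refine Nat.mul_le_mul_right _ ((List.toFinset_card_le _).trans ?_)
        rw [SimpleGraph.Walk.length_support, hp]

theorem sum_badWalks_sq_le (n s : ℕ) (hs : ∀ z v, #{x | G.Adj x z ∧ R x v} ≤ s) :
    ∑ c : V × V × V, (if G.Adj c.1 c.2.1 then #(badWalks G R n c.1 c.2.1 c.2.2) else 0) ^ 2
      ≤ (n + 1) * s * ∑ c : V × V, #(G.finsetWalkLength n c.1 c.2) ^ 2 := by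
  rw [Fintype.sum_prod_type, sum_comm, mul_sum]
  refine sum_le_sum fun ⟨z, y⟩ _ => ?_
  simp only
  calc ∑ x : V, (if G.Adj x z then #(badWalks G R n x z y) else 0) ^ 2
      ≤ ∑ x : V, (if G.Adj x z then #(badWalks G R n x z y) else 0) *
          #(G.finsetWalkLength n z y) := by
        refine sum_le_sum fun x _ => ?_
        rw [sq]
        refine Nat.mul_le_mul_left _ ?_
        split_ifs
        · exact card_filter_le _ _
        · exact Nat.zero_le _
    _ ≤ (n + 1) * s * #(G.finsetWalkLength n z y) * #(G.finsetWalkLength n z y) := by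
        rw [← sum_mul]
        exact Nat.mul_le_mul_right _ (sum_badWalks_le G R n s hs z y)
    _ = _ := by ring

theorem sum_walks_sq_le (n : ℕ) :
    ∑ c : V × V × V, (if G.Adj c.1 c.2.1 then #(G.finsetWalkLength n c.2.2 c.1) else 0) ^ 2
      ≤ G.maxDegree * ∑ c : V × V, #(G.finsetWalkLength n c.1 c.2) ^ 2 := by
  simp only [Fintype.sum_prod_type]
  rw [sum_comm (γ := V) (f := fun x y => #(G.finsetWalkLength n x y) ^ 2), mul_sum]
  refine sum_le_sum fun x _ => ?_
  rw [sum_comm, mul_sum]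
  refine sum_le_sum fun y _ => ?_
  simp only [ite_pow, zero_pow two_ne_zero, ← sum_filter, sum_const, smul_eq_mul]
  refine Nat.mul_le_mul_right _ ?_
  rw [← G.neighborFinset_eq_filter]
  exact G.degree_le_maxDegree x

/-- If every homomorphic `2(n+1)`-cycle has two related entries, rotating it puts one of them at
position `0` and the other within the next `n+1` positions. -/
theorem card_homs_le (n : ℕ) [NeZero (2 * (n + 1))] (hsymm : ∀ u v, R u v → R v u)
    (hbad : ∀ x ∈ homs G (2 * (n + 1)), ∃ i j, i ≠ j ∧ R (x i) (x j)) :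
    #(homs G (2 * (n + 1))) ≤ 2 * (n + 1) * #(badHoms G R n) := by
  classical
  let T : ZMod (2 * (n + 1)) → Finset (ZMod (2 * (n + 1)) → V) := fun k =>
    {x ∈ homs G (2 * (n + 1)) | ∃ d ∈ Icc 1 (n + 1), R (x k) (x (k + (d : ℕ)))}
  have hT : homs G (2 * (n + 1)) ⊆ univ.biUnion T := by
    intro x hx
    obtain ⟨i, j, hij, hR⟩ := hbad x hx
    simp only [T, mem_biUnion, mem_univ, true_and, mem_filter, mem_Icc]
    have hlt := ZMod.val_lt (j - i)
    have hpos : (j - i).val ≠ 0 := by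
      rw [Ne, ZMod.val_eq_zero, sub_eq_zero]; exact hij.symm
    by_cases h : (j - i).val ≤ n + 1
    · exact ⟨i, hx, (j - i).val, by omega, by simpa using hR⟩
    · refine ⟨j, hx, 2 * (n + 1) - (j - i).val, by omega, ?_⟩
      rw [Nat.cast_sub hlt.le, ZMod.natCast_self, ZMod.natCast_zmod_val]
      simpa using hsymm _ _ hR
  calc _ ≤ _ := card_le_card hT
    _ ≤ #(univ : Finset (ZMod (2 * (n + 1)))) * #(badHoms G R n) := by
        refine card_biUnion_le_card_mul _ _ _ fun k _ => ?_
        refine card_le_card_of_injOn (fun x i => x (k + i)) ?_ ?_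
        · intro x hx
          simp only [T, badHoms, homs, coe_filter, mem_filter, mem_univ, true_and,
            Set.mem_ofPred_eq] at hx ⊢
          refine ⟨fun i => ?_, by simpa using hx.2⟩
          rw [← add_assoc]
          exact hx.1 _
        · intro x _ x' _ h
          funext i
          simpa using congrFun h (i - k)
    _ = _ := by rw [card_univ, ZMod.card]

theorem card_homs_le_of_bad (n s : ℕ) (hn : 0 < n) [NeZero (2 * n)] [NeZero (2 * (n + 1))]
    (hs : ∀ z v, #{x | G.Adj x z ∧ R x v} ≤ s) (hsymm : ∀ u v, R u v → R v u)
    (hbad : ∀ x ∈ homs G (2 * (n + 1)), ∃ i j, i ≠ j ∧ R (x i) (x j)) :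
    #(homs G (2 * (n + 1))) ≤ 4 * (n + 1) ^ 3 * s * G.maxDegree * #(homs G (2 * n)) := by
  have h1 := card_homs_le G R n hsymm hbad
  have h2 : #(badHoms G R n) ^ 2 ≤
      ((n + 1) * s * #(homs G (2 * n))) * (G.maxDegree * #(homs G (2 * (n + 1)))) := by
    refine (Nat.pow_le_pow_left (card_badHoms_le G R n) 2).trans ?_
    refine (sum_mul_sq_le_sq_mul_sq _ _ _).trans ?_
    refine Nat.mul_le_mul ?_ ?_
    · exact (sum_badWalks_sq_le G R n s hs).trans (Nat.mul_le_mul_left _ (sum_sq_le G n hn))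
    · exact (sum_walks_sq_le G (n + 1)).trans
        (Nat.mul_le_mul_left _ (sum_sq_le G (n + 1) n.succ_pos))
  set N := #(homs G (2 * (n + 1)))
  rcases Nat.eq_zero_or_pos N with h0 | h0
  · rw [h0]; exact Nat.zero_le _
  refine Nat.le_of_mul_le_mul_right ?_ h0
  calc N * N ≤ (2 * (n + 1) * #(badHoms G R n)) * (2 * (n + 1) * #(badHoms G R n)) :=
        Nat.mul_le_mul h1 h1
    _ = 4 * (n + 1) ^ 2 * #(badHoms G R n) ^ 2 := by ring
    _ ≤ 4 * (n + 1) ^ 2 *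
        (((n + 1) * s * #(homs G (2 * n))) * (G.maxDegree * N)) := Nat.mul_le_mul_left _ h2
    _ = _ := by ring

/-! ### Set colorings -/

omit [DecidableEq V] [DecidableRel G.Adj] [DecidableRel R] [Fintype V] in
/-- A homomorphic cycle whose entries have pairwise disjoint (nonempty) colors is injective, and so
traces out a rainbow cycle. -/
theorem hasRainbowCycle {X : Type*} [DecidableEq X] (f : V → Finset X)
    (hne : ∀ v, (f v).Nonempty) (m : ℕ) [NeZero m] (hm : 3 ≤ m) (x : ZMod m → V)
    (hx : ∀ i, G.Adj (x i) (x (i + 1)))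
    (hd : ∀ i j, i ≠ j → Disjoint (f (x i)) (f (x j))) : HasRainbowCycle G f m := by
  have hinj : Function.Injective x := by
    intro i j hij
    by_contra h
    have := hd i j h
    rw [hij, disjoint_self] at this
    exact (hne (x j)).ne_empty this
  obtain ⟨w, hl, hw⟩ := exists_walk G m (fun i => x (i : ZMod m)) (a := x 0) (b := x 0)
    (fun i _ => by simpa using hx i) (by simp) (by simp)
  refine ⟨x 0, w, ?_, hl, ?_⟩
  · rw [SimpleGraph.Walk.isCycle_iff_isPath_tail_and_le_length, hl]
    refine ⟨?_, hm⟩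
    rw [← SimpleGraph.Walk.IsPath.getVert_injOn_iff]
    have htl : w.tail.length + 1 = m := by
      rw [SimpleGraph.Walk.length_tail_add_one, hl]
      rw [SimpleGraph.Walk.not_nil_iff_lt_length]; omega
    intro i hi j hj hij
    simp only [Set.mem_ofPred_eq] at hi hj
    rw [SimpleGraph.Walk.getVert_tail, SimpleGraph.Walk.getVert_tail, hw _ (by omega),
      hw _ (by omega)] at hij
    have := hinj hij
    push_cast at this
    have := congrArg ZMod.val (add_right_cancel this)
    rwa [ZMod.val_cast_of_lt (by omega), ZMod.val_cast_of_lt (by omega)] at this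
  · intro a ha b hb hab
    rw [SimpleGraph.Walk.mem_support_iff_exists_getVert] at ha hb
    obtain ⟨i, rfl, hi⟩ := ha
    obtain ⟨j, rfl, hj⟩ := hb
    rw [hw _ (by omega), hw _ (by omega)] at hab ⊢
    exact hd _ _ fun h => hab (by simp only [h])

omit [DecidableEq V] in
/-- The colors of the neighbors of `z` are pairwise disjoint, so at most `r` of them meet `f v`. -/
theorem card_related_le {X : Type*} [DecidableEq X] (f : V → Finset X) (r : ℕ)
    (hf : ∀ v, #(f v) = r) (hdiv : DiverseColoring G f) (z v : V) :
    #{x | G.Adj x z ∧ ¬ Disjoint (f x) (f v)} ≤ r := by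
  classical
  rw [← hf v]
  set S : Finset V := {x | G.Adj x z ∧ ¬ Disjoint (f x) (f v)} with hS
  have hdisj : (S : Set V).PairwiseDisjoint fun x => f x ∩ f v := by
    intro x hx y hy hxy
    simp only [hS, coe_filter, mem_univ, true_and, Set.mem_ofPred_eq] at hx hy
    exact (hdiv x y hxy (Or.inr ⟨z, hx.1, hy.1⟩)).mono inter_subset_left inter_subset_left
  calc #S = ∑ _x ∈ S, 1 := by simp
    _ ≤ ∑ x ∈ S, #(f x ∩ f v) := sum_le_sum fun x hx => by
        rw [hS, mem_filter, not_disjoint_iff_nonempty_inter] at hx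
        exact card_pos.mpr hx.2.2
    _ = #(S.biUnion fun x => f x ∩ f v) := (card_biUnion hdisj).symm
    _ ≤ #(f v) := card_le_card (biUnion_subset.mpr fun x _ => inter_subset_right)

end RainbowCycle

/-- for a graph `G` with a diverse `r`-set coloring `f` and `ℓ ≥ 2`, if `G`
has no rainbow cycle of length `2ℓ` then
`hom(C_{2ℓ},G) ≤ 256·ℓ³·r·Δ(G)·hom(C_{2ℓ-2},G)`. -/
theorem statement9 {V X : Type*} [Fintype V] [DecidableEq X] (G : SimpleGraph V)
    [DecidableRel G.Adj] (r : ℕ) (hr : 0 < r) (f : V → Finset X)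
    (hf : ∀ v, (f v).card = r) (hdiv : DiverseColoring G f) (ℓ : ℕ) (hℓ : 2 ≤ ℓ)
    (hnc : ¬ HasRainbowCycle G f (2 * ℓ)) :
    cycHom G (2 * ℓ) ≤ 256 * ℓ ^ 3 * r * G.maxDegree * cycHom G (2 * ℓ - 2) := by
  classical
  obtain ⟨n, rfl⟩ : ∃ n, ℓ = n + 1 := ⟨ℓ - 1, by omega⟩
  have : NeZero (2 * n) := ⟨by omega⟩
  have : NeZero (2 * (n + 1)) := ⟨by omega⟩
  rw [show 2 * (n + 1) - 2 = 2 * n by omega, RainbowCycle.cycHom_eq, RainbowCycle.cycHom_eq]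
  have hbad : ∀ x ∈ RainbowCycle.homs G (2 * (n + 1)),
      ∃ i j, i ≠ j ∧ ¬ Disjoint (f (x i)) (f (x j)) := by
    intro x hx
    by_contra! h
    simp only [RainbowCycle.homs, Finset.mem_filter, Finset.mem_univ, true_and] at hx
    exact hnc (RainbowCycle.hasRainbowCycle G f
      (fun v => Finset.card_pos.mp (by rw [hf]; exact hr)) _ (by omega) x hx h)
  refine (RainbowCycle.card_homs_le_of_bad G (fun u v => ¬ Disjoint (f u) (f v)) n r (by omega)
    (RainbowCycle.card_related_le G f r hf hdiv) (fun u v h h' => h h'.symm) hbad).trans ?_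
  gcongr
  norm_num
end
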